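/- arXiv:1308.2455 — 7 statements merged into one kernel-verified Lean document; each statement's English description precedes it below -/
import Mathlib

section
/- Let c > 0, let 𝒜⁰ : ℝ × ℝ³ → ℝ and 𝓐 : ℝ × ℝ³ → ℝ³ be C², let θ : ℝ × ℝ³ → ℝ be C¹, and let v : ℝ × ℝ³ → ℝ³ satisfy |v| < c pointwise with γ = (1 − |v|²/c²)^{−1/2}. With ℰ = −∇𝒜⁰ − c⁻¹∂_t𝓐 and ℬ = ∇×𝓐, if the equation of motion ℰ + (v/c)×ℬ = −(cγ)⁻¹ ∇θ holds at every point, then c⁻¹ ∂_t(𝓐·ℬ) + ∇·(𝒜⁰ℬ + ℰ×𝓐) = 2 (cγ)⁻¹ ℬ·∇θ at every point. -/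
open MeasureTheory

noncomputable section

abbrev V3 := Fin 3 → ℝ

/-- Euclidean dot product on ℝ³. -/
def dot3 (a b : V3) : ℝ := ∑ i, a i * b i

/-- Cross product on ℝ³. -/
def cross3 (a b : V3) : V3 := fun i => a (i + 1) * b (i + 2) - a (i + 2) * b (i + 1)

/-- Time derivative ∂_t of a scalar function on ℝ × ℝ³. -/
def pdt (f : ℝ × V3 → ℝ) (p : ℝ × V3) : ℝ := fderiv ℝ f p ((1 : ℝ), (0 : V3))

/-- Spatial derivative ∂_j of a scalar function on ℝ × ℝ³. -/
def pdx (j : Fin 3) (f : ℝ × V3 → ℝ) (p : ℝ × V3) : ℝ :=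
  fderiv ℝ f p ((0 : ℝ), Pi.single j 1)

/-- Spatial gradient. -/
def grad3 (f : ℝ × V3 → ℝ) (p : ℝ × V3) : V3 := fun j => pdx j f p

/-- Spatial curl. -/
def curl3 (A : ℝ × V3 → V3) (p : ℝ × V3) : V3 := fun i =>
  pdx (i + 1) (fun q => A q (i + 2)) p - pdx (i + 2) (fun q => A q (i + 1)) p

/-- Spatial divergence. -/
def div3 (A : ℝ × V3 → V3) (p : ℝ × V3) : ℝ := ∑ j, pdx j (fun q => A q j) p

/-- ℰ = −∇𝒜⁰ − c⁻¹ ∂_t 𝓐. -/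
def Efield (c : ℝ) (A0 : ℝ × V3 → ℝ) (A : ℝ × V3 → V3) (p : ℝ × V3) : V3 := fun i =>
  -grad3 A0 p i - c⁻¹ * fderiv ℝ (fun q => A q i) p ((1 : ℝ), (0 : V3))

/-- ℬ = ∇×𝓐. -/
def Bfield (A : ℝ × V3 → V3) (p : ℝ × V3) : V3 := curl3 A p

/-- The Lorentz factor γ = (1 − |v|²/c²)^(−1/2). -/
def gamma3 (c : ℝ) (v : ℝ × V3 → V3) (p : ℝ × V3) : ℝ :=
  (Real.sqrt (1 - dot3 (v p) (v p) / c ^ 2))⁻¹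

def DD (w : ℝ × V3) (f : ℝ × V3 → ℝ) (p : ℝ × V3) : ℝ := fderiv ℝ f p w

lemma DD_mul (w : ℝ × V3) {f g : ℝ × V3 → ℝ} (hf : Differentiable ℝ f) (hg : Differentiable ℝ g)
    (p : ℝ × V3) : DD w (fun q => f q * g q) p = DD w f p * g p + f p * DD w g p := by
  unfold DD
  rw [fderiv_fun_mul (hf p) (hg p)]
  simp
  ring

lemma DD_add (w : ℝ × V3) {f g : ℝ × V3 → ℝ} (hf : Differentiable ℝ f) (hg : Differentiable ℝ g)
    (p : ℝ × V3) : DD w (fun q => f q + g q) p = DD w f p + DD w g p := by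
  unfold DD
  rw [fderiv_fun_add (hf p) (hg p)]
  simp

lemma DD_sub (w : ℝ × V3) {f g : ℝ × V3 → ℝ} (hf : Differentiable ℝ f) (hg : Differentiable ℝ g)
    (p : ℝ × V3) : DD w (fun q => f q - g q) p = DD w f p - DD w g p := by
  unfold DD
  rw [fderiv_fun_sub (hf p) (hg p)]
  simp

lemma DD_neg (w : ℝ × V3) (f : ℝ × V3 → ℝ)
    (p : ℝ × V3) : DD w (fun q => - f q) p = - DD w f p := by
  unfold DD
  rw [fderiv_fun_neg]
  simp

lemma DD_cmul (w : ℝ × V3) (c : ℝ) {f : ℝ × V3 → ℝ} (hf : Differentiable ℝ f)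
    (p : ℝ × V3) : DD w (fun q => c * f q) p = c * DD w f p := by
  unfold DD
  rw [fderiv_const_mul (hf p)]
  simp

lemma DD_diff (w : ℝ × V3) {f : ℝ × V3 → ℝ} (hf : ContDiff ℝ 2 f) :
    Differentiable ℝ (DD w f) := by
  have h : ContDiff ℝ 1 (fderiv ℝ f) := hf.fderiv_right (by norm_num)
  exact fun p => ((h.differentiable (by norm_num)) p).clm_apply (differentiableAt_const w)

lemma DD_comm (w u : ℝ × V3) {f : ℝ × V3 → ℝ} (hf : ContDiff ℝ 2 f) (p : ℝ × V3) :
    DD w (DD u f) p = DD u (DD w f) p := by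
  have h : ContDiff ℝ 1 (fderiv ℝ f) := hf.fderiv_right (by norm_num)
  have hd := (h.differentiable (by norm_num)) p
  have key : ∀ w u : ℝ × V3, DD w (DD u f) p = fderiv ℝ (fderiv ℝ f) p w u := by
    intro w u
    have : HasFDerivAt (DD u f) ((ContinuousLinearMap.apply ℝ ℝ u).comp
        (fderiv ℝ (fderiv ℝ f) p)) p :=
      (ContinuousLinearMap.apply ℝ ℝ u).hasFDerivAt.comp p hd.hasFDerivAt
    unfold DD at this ⊢
    rw [this.fderiv]
    simp
  rw [key, key]
  exact (hf.contDiffAt.isSymmSndFDerivAt (by simp)) w u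

/-- If the equation of motion ℰ + (v/c)×ℬ = −(cγ)⁻¹∇θ holds everywhere, then
    c⁻¹∂_t(𝓐·ℬ) + ∇·(𝒜⁰ℬ + ℰ×𝓐) = 2(cγ)⁻¹ ℬ·∇θ everywhere. -/
theorem helicity_current_barotropic (c : ℝ) (hc : 0 < c)
    (A0 : ℝ × V3 → ℝ) (A : ℝ × V3 → V3) (θ : ℝ × V3 → ℝ) (v : ℝ × V3 → V3)
    (hA0 : ContDiff ℝ 2 A0) (hA : ContDiff ℝ 2 A) (hθ : ContDiff ℝ 1 θ)
    (hv : ∀ p, Real.sqrt (dot3 (v p) (v p)) < c)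
    (heqm : ∀ p, ∀ i : Fin 3,
      Efield c A0 A p i + cross3 (v p) (Bfield A p) i / c
        = -((c * gamma3 c v p)⁻¹) * grad3 θ p i) :
    ∀ p : ℝ × V3,
      c⁻¹ * pdt (fun q => dot3 (A q) (Bfield A q)) p
        + div3 (fun q i => A0 q * Bfield A q i + cross3 (Efield c A0 A q) (A q) i) p
      = 2 * (c * gamma3 c v p)⁻¹ * dot3 (Bfield A p) (grad3 θ p) := by
  intro p
  obtain ⟨a, ha⟩ : ∃ a : Fin 3 → ℝ × V3 → ℝ, ∀ q i, A q i = a i q := ⟨fun i q => A q i, fun _ _ => rfl⟩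
  have ha2 : ∀ i, ContDiff ℝ 2 (a i) := fun i => by
    have : a i = fun q => A q i := by funext q; rw [ha]
    rw [this]
    exact (contDiff_pi.1 hA) i
  have had : ∀ i, Differentiable ℝ (a i) := fun i => (ha2 i).differentiable (by norm_num)
  have h0d : Differentiable ℝ A0 := hA0.differentiable (by norm_num)
  set T : ℝ × V3 := ((1 : ℝ), (0 : V3)) with hT
  set X : Fin 3 → ℝ × V3 := fun j => ((0 : ℝ), Pi.single j 1) with hX
  have hpdt : ∀ f q, pdt f q = DD T f q := fun _ _ => rfl
  have hpdx : ∀ j f q, pdx j f q = DD (X j) f q := fun _ _ _ => rfl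
  have hE : ∀ q i, Efield c A0 A q i = -DD (X i) A0 q - c⁻¹ * DD T (a i) q := by
    intro q i
    have : a i = fun q => A q i := by funext q; rw [ha]
    rw [this]; rfl
  have hB : ∀ q i, Bfield A q i = DD (X (i+1)) (a (i+2)) q - DD (X (i+2)) (a (i+1)) q := by
    intro q i
    have : ∀ i, a i = fun q => A q i := by intro i; funext q; rw [ha]
    rw [this, this]; rfl
  have hm := heqm p
  generalize (c * gamma3 c v p)⁻¹ = k at hm ⊢
  have main : c⁻¹ * pdt (fun q => dot3 (A q) (Bfield A q)) p
        + div3 (fun q i => A0 q * Bfield A q i + cross3 (Efield c A0 A q) (A q) i) p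
      = -2 * dot3 (Efield c A0 A p) (Bfield A p) := by
    have d1 : ∀ w i, Differentiable ℝ (fun q => DD w (a i) q) := fun w i => DD_diff w (ha2 i)
    have d0 : ∀ w, Differentiable ℝ (fun q => DD w A0 q) := fun w => DD_diff w hA0
    have dB : ∀ i, Differentiable ℝ (fun q => Bfield A q i) := fun i => by
      simp only [hB]; exact (d1 _ _).sub (d1 _ _)
    have dE : ∀ i, Differentiable ℝ (fun q => Efield c A0 A q i) := fun i => by
      simp only [hE]; exact (d0 _).neg.sub ((d1 _ _).const_mul _)
    have DB : ∀ w i, DD w (fun q => Bfield A q i) p =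
        DD w (DD (X (i+1)) (a (i+2))) p - DD w (DD (X (i+2)) (a (i+1))) p := fun w i => by
      simp only [hB]; exact DD_sub w (d1 _ _) (d1 _ _) p
    have DE : ∀ w i, DD w (fun q => Efield c A0 A q i) p =
        -DD w (DD (X i) A0) p - c⁻¹ * DD w (DD T (a i)) p := fun w i => by
      simp only [hE]
      rw [DD_sub w (d0 _).fun_neg ((d1 _ _).const_mul _) p, DD_neg, DD_cmul w _ (d1 _ _)]
    have e1 : pdt (fun q => dot3 (A q) (Bfield A q)) p
        = ∑ i, (DD T (a i) p * Bfield A p i + a i p * DD T (fun q => Bfield A q i) p) := by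
      simp only [hpdt, dot3, ha, Fin.sum_univ_three]
      have m := fun i => (had i).fun_mul (dB i)
      rw [DD_add T ((m 0).fun_add (m 1)) (m 2), DD_add T (m 0) (m 1), DD_mul T (had 0) (dB 0),
        DD_mul T (had 1) (dB 1), DD_mul T (had 2) (dB 2)]
    have e2 : ∀ w i, DD w (fun q => A0 q * Bfield A q i + cross3 (Efield c A0 A q) (A q) i) p
        = DD w A0 p * Bfield A p i + A0 p * DD w (fun q => Bfield A q i) p
          + (DD w (fun q => Efield c A0 A q (i+1)) p * a (i+2) p
            + Efield c A0 A p (i+1) * DD w (a (i+2)) p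
            - (DD w (fun q => Efield c A0 A q (i+2)) p * a (i+1) p
            + Efield c A0 A p (i+2) * DD w (a (i+1)) p)) := by
      intro w i
      simp only [cross3, ha]
      have m := fun i j => (dE i).fun_mul (had j)
      rw [DD_add w (h0d.fun_mul (dB i)) ((m _ _).fun_sub (m _ _)), DD_sub w (m _ _) (m _ _),
        DD_mul w h0d (dB i), DD_mul w (dE _) (had _), DD_mul w (dE _) (had _)]
    rw [e1]
    simp only [div3, hpdx, e2]
    simp only [DB, DE]
    simp only [dot3, Fin.sum_univ_three, hE, hB]
    simp only [show (0:Fin 3)+1 = 1 from rfl, show (0:Fin 3)+2 = 2 from rfl,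
      show (1:Fin 3)+1 = 2 from rfl, show (1:Fin 3)+2 = 0 from rfl,
      show (2:Fin 3)+1 = 0 from rfl, show (2:Fin 3)+2 = 1 from rfl]
    simp only [fun j i => DD_comm T (X j) (ha2 i) p]
    rw [DD_comm (X 1) (X 0) hA0 p, DD_comm (X 2) (X 0) hA0 p, DD_comm (X 2) (X 1) hA0 p]
    simp only [fun i => DD_comm (X 1) (X 0) (ha2 i) p, fun i => DD_comm (X 2) (X 0) (ha2 i) p,
      fun i => DD_comm (X 2) (X 1) (ha2 i) p]
    ring
  rw [main]
  have m0 := hm 0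
  have m1 := hm 1
  have m2 := hm 2
  simp only [cross3, show (0:Fin 3)+1 = 1 from rfl, show (0:Fin 3)+2 = 2 from rfl,
      show (1:Fin 3)+1 = 2 from rfl, show (1:Fin 3)+2 = 0 from rfl,
      show (2:Fin 3)+1 = 0 from rfl, show (2:Fin 3)+2 = 1 from rfl] at m0 m1 m2
  simp only [dot3, Fin.sum_univ_three]
  linear_combination (-2 * Bfield A p 0) * m0 + (-2 * Bfield A p 1) * m1 + (-2 * Bfield A p 2) * m2
end
end

section
/- Let c > 0, let 𝒜⁰ : ℝ × ℝ³ → ℝ and 𝓐 : ℝ × ℝ³ → ℝ³ be C², let θ and γ⁻¹ be C¹ functions on ℝ × ℝ³ with γ ≥ 1, and suppose the barotropic equation of motion ℰ + (v/c)×ℬ = −(cγ)⁻¹ ∇θ holds everywhere, where ℰ = −∇𝒜⁰ − c⁻¹∂_t𝓐, ℬ = ∇×𝓐, and v is the velocity field with γ = (1 − |v|²/c²)^{−1/2}. Assume there is a compact set 𝒦 ⊂ ℝ³ such that 𝓐(t, ·) is supported in 𝒦 for all t in an open interval I. Then the semi-relativistic helicity C(t) = ∫_{ℝ³} (𝓐·ℬ)(t,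 x) d³x is differentiable on I and dC/dt = 2 ∫_{ℝ³} γ⁻¹ ℬ·∇θ d³x = −2 ∫_{ℝ³} θ ℬ·∇(γ⁻¹) d³x. -/
open MeasureTheory

noncomputable section

/-- The semi-relativistic helicity C(t) = ∫_{ℝ³} 𝓐·ℬ d³x. -/
def semiHelicity (A : ℝ × V3 → V3) (t : ℝ) : ℝ :=
  ∫ x : V3, dot3 (A (t, x)) (Bfield A (t, x))

/-- directional derivative -/
def ddir (u : ℝ × V3) (f : ℝ × V3 → ℝ) (p : ℝ × V3) : ℝ := fderiv ℝ f p u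

lemma ddir_contDiff {f : ℝ × V3 → ℝ} (hf : ContDiff ℝ 2 f) (u : ℝ × V3) :
    ContDiff ℝ 1 (ddir u f) := by
  unfold ddir
  exact (hf.fderiv_right (m := 1) (by norm_num)).clm_apply contDiff_const

lemma ddir_cont {f : ℝ × V3 → ℝ} (hf : ContDiff ℝ 1 f) (u : ℝ × V3) :
    Continuous (ddir u f) := by
  unfold ddir
  exact (hf.continuous_fderiv (by norm_num)).clm_apply continuous_const

lemma ddir_comm {f : ℝ × V3 → ℝ} (hf : ContDiff ℝ 2 f) (u w p : ℝ × V3) :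
    ddir u (ddir w f) p = ddir w (ddir u f) p := by
  have h1 : DifferentiableAt ℝ (fderiv ℝ f) p :=
    ((hf.fderiv_right (m := 1) (by norm_num)).differentiable (by norm_num)) p
  have key : ∀ u w : ℝ × V3, ddir u (ddir w f) p = fderiv ℝ (fderiv ℝ f) p u w := by
    intro u w
    have := (h1.hasFDerivAt.clm_apply (hasFDerivAt_const w p)).fderiv
    show fderiv ℝ (fun q => fderiv ℝ f q w) p u = _
    rw [this]
    simp
  rw [key, key]
  exact (hf.contDiffAt.isSymmSndFDerivAt (by simp)) u w

lemma ddir_sub {f g : ℝ × V3 → ℝ} (hf : ContDiff ℝ 1 f) (hg : ContDiff ℝ 1 g) (u p : ℝ × V3) :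
    ddir u (fun q => f q - g q) p = ddir u f p - ddir u g p := by
  unfold ddir
  rw [fderiv_fun_sub (hf.differentiable (by norm_num) p) (hg.differentiable (by norm_num) p)]
  simp

lemma ddir_add {f g : ℝ × V3 → ℝ} (hf : ContDiff ℝ 1 f) (hg : ContDiff ℝ 1 g) (u p : ℝ × V3) :
    ddir u (fun q => f q + g q) p = ddir u f p + ddir u g p := by
  unfold ddir
  rw [fderiv_fun_add (hf.differentiable (by norm_num) p) (hg.differentiable (by norm_num) p)]
  simp

lemma ddir_mul {f g : ℝ × V3 → ℝ} (hf : ContDiff ℝ 1 f) (hg : ContDiff ℝ 1 g) (u p : ℝ × V3) :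
    ddir u (fun q => f q * g q) p = f p * ddir u g p + g p * ddir u f p := by
  unfold ddir
  rw [fderiv_fun_mul (hf.differentiable (by norm_num) p) (hg.differentiable (by norm_num) p)]
  simp

/-- vanishing outside the compact set during the interval -/
def Van (a b : ℝ) (K : Set V3) (f : ℝ × V3 → ℝ) : Prop :=
  ∀ t ∈ Set.Ioo a b, ∀ x : V3, x ∉ K → f (t, x) = 0

lemma Van.ddir {a b : ℝ} {K : Set V3} (hK : IsCompact K) {f : ℝ × V3 → ℝ} (h : Van a b K f)
    (u : ℝ × V3) : Van a b K (ddir u f) := by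
  intro t ht x hx
  have ho : IsOpen (Set.Ioo a b ×ˢ Kᶜ) := isOpen_Ioo.prod hK.isClosed.isOpen_compl
  have : f =ᶠ[nhds (t, x)] fun _ => 0 := by
    filter_upwards [ho.mem_nhds (show (t, x) ∈ Set.Ioo a b ×ˢ Kᶜ from ⟨ht, hx⟩)] with q hq
    exact h q.1 hq.1 q.2 hq.2
  unfold _root_.ddir
  rw [this.fderiv_eq]
  simp

lemma Van.integrable {a b : ℝ} {K : Set V3} (hK : IsCompact K) {f : ℝ × V3 → ℝ}
    (h : Van a b K f) (hf : Continuous f) {t : ℝ} (ht : t ∈ Set.Ioo a b) :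
    Integrable (fun x : V3 => f (t, x)) := by
  apply Continuous.integrable_of_hasCompactSupport
  · exact hf.comp (by fun_prop)
  · exact HasCompactSupport.intro hK (fun x hx => h t ht x hx)

lemma slice_fderiv {f : ℝ × V3 → ℝ} (hf : ContDiff ℝ 1 f) (t : ℝ) (x e : V3) :
    fderiv ℝ (fun y : V3 => f (t, y)) x e = ddir (0, e) f (t, x) := by
  have h1 := (hf.differentiable (by norm_num) (t, x)).hasFDerivAt
  have h2 : HasFDerivAt (fun y : V3 => (t, y)) (ContinuousLinearMap.inr ℝ ℝ V3) x :=
    hasFDerivAt_prodMk_right t x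
  have h3 := (HasFDerivAt.comp x h1 h2).fderiv
  have h4 : fderiv ℝ (fun y : V3 => f (t, y)) x = _ := h3
  rw [h4]
  simp [ddir]

/-- integrable with zero integral -/
def Nul (h : V3 → ℝ) : Prop := Integrable h ∧ ∫ x, h x = 0

lemma Nul.add {f g : V3 → ℝ} (hf : Nul f) (hg : Nul g) : Nul (fun x => f x + g x) :=
  ⟨hf.1.add hg.1, by rw [integral_add hf.1 hg.1, hf.2, hg.2, add_zero]⟩

lemma Nul.sub {f g : V3 → ℝ} (hf : Nul f) (hg : Nul g) : Nul (fun x => f x - g x) :=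
  ⟨hf.1.sub hg.1, by rw [integral_sub hf.1 hg.1, hf.2, hg.2, sub_zero]⟩

lemma Nul.smul {f : V3 → ℝ} (hf : Nul f) (r : ℝ) : Nul (fun x => r * f x) :=
  ⟨hf.1.const_mul r, by rw [integral_const_mul, hf.2, mul_zero]⟩

lemma Nul.congr {f g : V3 → ℝ} (hf : Nul f) (h : ∀ x, g x = f x) : Nul g := by
  have : g = f := funext h
  rwa [this]

lemma nul_ibp {a b : ℝ} {K : Set V3} (hK : IsCompact K) {f g : ℝ × V3 → ℝ}
    (h : Van a b K f) (hf : ContDiff ℝ 1 f) (hg : ContDiff ℝ 1 g) {t : ℝ}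
    (ht : t ∈ Set.Ioo a b) (e : V3) :
    Nul (fun x => f (t, x) * ddir (0, e) g (t, x) + ddir (0, e) f (t, x) * g (t, x)) := by
  have i1 : Integrable (fun x : V3 => f (t, x) * ddir (0, e) g (t, x)) :=
    Van.integrable (f := fun q => f q * ddir (0, e) g q) hK
      (fun s hs x hx => by simp [h s hs x hx]) (hf.continuous.mul (ddir_cont hg _)) ht
  have i2 : Integrable (fun x : V3 => ddir (0, e) f (t, x) * g (t, x)) :=
    Van.integrable (f := fun q => ddir (0, e) f q * g q) hK
      (fun s hs x hx => by simp [h.ddir hK (0, e) s hs x hx])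
      ((ddir_cont hf _).mul hg.continuous) ht
  have i3 : Integrable (fun x : V3 => f (t, x) * g (t, x)) :=
    Van.integrable (f := fun q => f q * g q) hK
      (fun s hs x hx => by simp [h s hs x hx]) (hf.continuous.mul hg.continuous) ht
  refine ⟨i1.add i2, ?_⟩
  rw [integral_add i1 i2]
  have hs : ∀ {k : ℝ × V3 → ℝ}, ContDiff ℝ 1 k → Differentiable ℝ (fun y : V3 => k (t, y)) :=
    fun hk => (hk.comp (by fun_prop : ContDiff ℝ 1 (fun y : V3 => (t, y)))).differentiable
      (by norm_num)
  have := integral_mul_fderiv_eq_neg_fderiv_mul_of_integrable (μ := (volume : Measure V3))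
    (f := fun y : V3 => f (t, y)) (g := fun y : V3 => g (t, y)) (v := e)
    (by simpa only [slice_fderiv hf] using i2) (by simpa only [slice_fderiv hg] using i1) i3
    (fun x _ => hs hf x) (fun x _ => hs hg x)
  simp only [slice_fderiv hf, slice_fderiv hg] at this
  rw [this]; ring

lemma deriv_param {a b : ℝ} {K : Set V3} (hK : IsCompact K) {g : ℝ × V3 → ℝ}
    (h : Van a b K g) (hg : ContDiff ℝ 1 g) {t : ℝ} (ht : t ∈ Set.Ioo a b) :
    HasDerivAt (fun s => ∫ x : V3, g (s, x)) (∫ x : V3, ddir (1, 0) g (t, x)) t := by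
  obtain ⟨a', ha1, ha2⟩ := exists_between ht.1
  obtain ⟨b', hb1, hb2⟩ := exists_between ht.2
  have hsub : ∀ s ∈ Set.Icc a' b', s ∈ Set.Ioo a b := fun s hs =>
    ⟨ha1.trans_le hs.1, hs.2.trans_lt hb2⟩
  have hc : Continuous (ddir (1, 0) g) := ddir_cont hg _
  obtain ⟨M, hM⟩ := ((isCompact_Icc (a := a') (b := b')).prod hK).exists_bound_of_continuousOn
    hc.continuousOn
  have hv := h.ddir hK (1, 0)
  refine (hasDerivAt_integral_of_dominated_loc_of_deriv_le (μ := (volume : Measure V3))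
    (F := fun s x => g (s, x)) (F' := fun s x => ddir (1, 0) g (s, x))
    (bound := K.indicator (fun _ => M)) (s := Set.Icc a' b')
    (Icc_mem_nhds ha2 hb1) ?_ (h.integrable hK hg.continuous ht)
    (hv.integrable hK hc ht).aestronglyMeasurable ?_ ?_ ?_).2
  · exact Filter.Eventually.of_forall fun s =>
      (hg.continuous.comp (by fun_prop : Continuous fun x : V3 => (s, x))).aestronglyMeasurable
  · refine Filter.Eventually.of_forall fun x s hs => ?_
    by_cases hx : x ∈ K
    · rw [Set.indicator_of_mem hx]
      exact hM (s, x) ⟨hs, hx⟩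
    · rw [Set.indicator_of_notMem hx, hv s (hsub s hs) x hx]
      simp
  · rw [integrable_indicator_iff hK.measurableSet]
    exact integrableOn_const hK.measure_lt_top.ne
  · refine Filter.Eventually.of_forall fun x s hs => ?_
    have h1 := (hg.differentiable (by norm_num) (s, x)).hasFDerivAt
    have h2 : HasDerivAt (fun r : ℝ => (r, x)) ((1 : ℝ), (0 : V3)) s :=
      (hasDerivAt_id s).prodMk (hasDerivAt_const s x)
    exact h1.comp_hasDerivAt s h2

/-- Evolution of the semi-relativistic helicity in a barotropic relativistic fluid:
    dC/dt = 2∫ γ⁻¹ ℬ·∇θ d³x = −2∫ θ ℬ·∇(γ⁻¹) d³x. -/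
theorem semi_helicity_evolution (c : ℝ) (hc : 0 < c)
    (A0 : ℝ × V3 → ℝ) (A : ℝ × V3 → V3) (θ : ℝ × V3 → ℝ) (v : ℝ × V3 → V3)
    (hA0 : ContDiff ℝ 2 A0) (hA : ContDiff ℝ 2 A) (hθ : ContDiff ℝ 1 θ)
    (hv : ∀ p, Real.sqrt (dot3 (v p) (v p)) < c)
    (hγ : ∀ p, 1 ≤ gamma3 c v p)
    (hγinv : ContDiff ℝ 1 (fun p => (gamma3 c v p)⁻¹))
    (heqm : ∀ p, ∀ i : Fin 3,
      Efield c A0 A p i + cross3 (v p) (Bfield A p) i / c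
        = -((c * gamma3 c v p)⁻¹) * grad3 θ p i)
    (a b : ℝ) (𝒦 : Set V3) (h𝒦 : IsCompact 𝒦)
    (hsupp : ∀ t ∈ Set.Ioo a b, ∀ x : V3, x ∉ 𝒦 → A (t, x) = 0) :
    ∀ t ∈ Set.Ioo a b,
      HasDerivAt (semiHelicity A)
        (2 * ∫ x : V3, (gamma3 c v (t, x))⁻¹ * dot3 (Bfield A (t, x)) (grad3 θ (t, x))) t
      ∧
      (2 * ∫ x : V3, (gamma3 c v (t, x))⁻¹ * dot3 (Bfield A (t, x)) (grad3 θ (t, x)))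
        = -2 * ∫ x : V3,
            θ (t, x) * dot3 (Bfield A (t, x)) (grad3 (fun q => (gamma3 c v q)⁻¹) (t, x)) := by
  intro t ht
  -- components
  set e : Fin 3 → ℝ × V3 := fun j => ((0 : ℝ), Pi.single j 1) with he
  set al : Fin 3 → ℝ × V3 → ℝ := fun i q => A q i with hal
  have hal2 : ∀ i, ContDiff ℝ 2 (al i) := fun i => contDiff_pi.1 hA i
  have hal1 : ∀ i, ContDiff ℝ 1 (al i) := fun i => (hal2 i).of_le (by norm_num)
  have vA : ∀ i, Van a b 𝒦 (al i) := fun i s hs x hx => by simp [hal, hsupp s hs x hx]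
  set w : Fin 3 → ℝ × V3 → ℝ := fun i => ddir (1, 0) (al i) with hw
  have hw1 : ∀ i, ContDiff ℝ 1 (w i) := fun i => ddir_contDiff (hal2 i) _
  set Bi : Fin 3 → ℝ × V3 → ℝ := fun i q =>
    ddir (e (i + 1)) (al (i + 2)) q - ddir (e (i + 2)) (al (i + 1)) q with hBi
  have hB : ∀ q i, Bfield A q i = Bi i q := fun q i => rfl
  have hB1 : ∀ i, ContDiff ℝ 1 (Bi i) := fun i =>
    (ddir_contDiff (hal2 _) _).sub (ddir_contDiff (hal2 _) _)
  have vB : ∀ i, Van a b 𝒦 (Bi i) := fun i s hs x hx => by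
    simp only [hBi]
    rw [(vA _).ddir h𝒦 _ s hs x hx, (vA _).ddir h𝒦 _ s hs x hx, sub_zero]
  have dB : ∀ u i q, ddir u (Bi i) q =
      ddir u (ddir (e (i + 1)) (al (i + 2))) q - ddir u (ddir (e (i + 2)) (al (i + 1))) q :=
    fun u i q => ddir_sub (ddir_contDiff (hal2 _) _) (ddir_contDiff (hal2 _) _) u q
  have i10 : (1 : Fin 3) + 1 = 2 := rfl
  have i20 : (1 : Fin 3) + 2 = 0 := rfl
  have i30 : (2 : Fin 3) + 1 = 0 := rfl
  have i40 : (2 : Fin 3) + 2 = 1 := rfl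
  have divB : ∀ q, ddir (e 0) (Bi 0) q + ddir (e 1) (Bi 1) q + ddir (e 2) (Bi 2) q = 0 := by
    intro q
    simp only [dB, zero_add, i10, i20, i30, i40]
    rw [ddir_comm (hal2 2) (e 1) (e 0), ddir_comm (hal2 1) (e 2) (e 0),
      ddir_comm (hal2 0) (e 2) (e 1)]
    ring
  -- flux lemma
  have flux : ∀ f : ℝ × V3 → ℝ, ContDiff ℝ 1 f →
      Nul (fun x => dot3 (Bfield A (t, x)) (grad3 f (t, x))) := by
    intro f hf
    refine (((nul_ibp h𝒦 (vB 0) (hB1 0) hf ht (Pi.single 0 1)).add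
      (nul_ibp h𝒦 (vB 1) (hB1 1) hf ht (Pi.single 1 1))).add
      (nul_ibp h𝒦 (vB 2) (hB1 2) hf ht (Pi.single 2 1))).congr fun x => ?_
    have h0 := divB (t, x)
    simp only [he] at h0
    simp only [dot3, Fin.sum_univ_three, hB]
    change Bi 0 (t, x) * ddir (0, Pi.single 0 1) f (t, x)
      + Bi 1 (t, x) * ddir (0, Pi.single 1 1) f (t, x)
      + Bi 2 (t, x) * ddir (0, Pi.single 2 1) f (t, x) = _
    linear_combination (-f (t, x)) * h0
  -- pointwise equation of motion dotted with B
  have hEB : ∀ q, (gamma3 c v q)⁻¹ * dot3 (Bfield A q) (grad3 θ q) =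
      c * dot3 (Bfield A q) (grad3 A0 q)
        + (Bi 0 q * w 0 q + Bi 1 q * w 1 q + Bi 2 q * w 2 q) := by
    intro q
    have e0 := heqm q 0
    have e1 := heqm q 1
    have e2 := heqm q 2
    have hE : ∀ i, Efield c A0 A q i = -grad3 A0 q i - c⁻¹ * w i q := fun i => rfl
    simp only [hE, cross3, hB, zero_add, i10, i20, i30, i40, mul_inv] at e0 e1 e2
    simp only [dot3, Fin.sum_univ_three, hB]
    have hcc : c * c⁻¹ = 1 := mul_inv_cancel₀ hc.ne'
    simp only [div_eq_mul_inv] at e0 e1 e2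
    generalize (gamma3 c v q)⁻¹ = G at *
    generalize c⁻¹ = d at *
    linear_combination (c * Bi 0 q) * e0 + (c * Bi 1 q) * e1 + (c * Bi 2 q) * e2
      + (Bi 0 q * w 0 q + Bi 1 q * w 1 q + Bi 2 q * w 2 q
        - G * (Bi 0 q * grad3 θ q 0 + Bi 1 q * grad3 θ q 1 + Bi 2 q * grad3 θ q 2)) * hcc
  have contBf : ∀ f : ℝ × V3 → ℝ, ContDiff ℝ 1 f →
      Continuous (fun q => dot3 (Bfield A q) (grad3 f q)) := by
    intro f hf
    simp only [dot3, hB]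
    exact continuous_finsetSum _ fun i _ => (hB1 i).continuous.mul (ddir_cont hf _)
  have intR : Integrable (fun x : V3 =>
      (gamma3 c v (t, x))⁻¹ * dot3 (Bfield A (t, x)) (grad3 θ (t, x))) :=
    Van.integrable (a := a) (b := b)
      (f := fun q => (gamma3 c v q)⁻¹ * dot3 (Bfield A q) (grad3 θ q)) h𝒦
      (fun s hs x hx => by simp [dot3, hB, vB _ s hs x hx])
      (hγinv.continuous.mul (contBf θ hθ)) ht
  have intS : Integrable (fun x : V3 =>
      θ (t, x) * dot3 (Bfield A (t, x)) (grad3 (fun q => (gamma3 c v q)⁻¹) (t, x))) :=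
    Van.integrable (a := a) (b := b)
      (f := fun q => θ q * dot3 (Bfield A q) (grad3 (fun q => (gamma3 c v q)⁻¹) q)) h𝒦
      (fun s hs x hx => by simp [dot3, hB, vB _ s hs x hx])
      (hθ.continuous.mul (contBf _ hγinv)) ht
  constructor
  · set g : ℝ × V3 → ℝ := fun q => al 0 q * Bi 0 q + al 1 q * Bi 1 q + al 2 q * Bi 2 q with hg
    have hm : ∀ i, ContDiff ℝ 1 (fun q => al i q * Bi i q) := fun i => (hal1 i).mul (hB1 i)
    have hg1 : ContDiff ℝ 1 g := ((hm 0).add (hm 1)).add (hm 2)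
    have vg : Van a b 𝒦 g := fun s hs x hx => by
      simp [hg, vB _ s hs x hx]
    have hC : semiHelicity A = fun s => ∫ x : V3, g (s, x) := by
      funext s
      simp only [semiHelicity, dot3, Fin.sum_univ_three, hB, hg, hal]
    have hd := deriv_param h𝒦 vg hg1 ht
    rw [hC]
    convert hd using 1
    have dg : ∀ q, ddir (1, 0) g q =
        (al 0 q * ddir (1, 0) (Bi 0) q + Bi 0 q * w 0 q)
        + (al 1 q * ddir (1, 0) (Bi 1) q + Bi 1 q * w 1 q)
        + (al 2 q * ddir (1, 0) (Bi 2) q + Bi 2 q * w 2 q) := by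
      intro q
      rw [hg, ddir_add ((hm 0).add (hm 1)) (hm 2), ddir_add (hm 0) (hm 1),
        ddir_mul (hal1 0) (hB1 0), ddir_mul (hal1 1) (hB1 1), ddir_mul (hal1 2) (hB1 2)]
    have dtB : ∀ i q, ddir (1, 0) (Bi i) q =
        ddir (e (i + 1)) (w (i + 2)) q - ddir (e (i + 2)) (w (i + 1)) q := by
      intro i q
      rw [dB, ddir_comm (hal2 _) (1, 0), ddir_comm (hal2 _) (1, 0)]
    have nn : ∀ i j k, Nul (fun x => al i (t, x) * ddir (e j) (w k) (t, x)
        + ddir (e j) (al i) (t, x) * w k (t, x)) := fun i j k =>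
      nul_ibp h𝒦 (vA i) (hal1 i) (hw1 k) ht _
    have intg : Integrable (fun x : V3 => ddir (1, 0) g (t, x)) :=
      (vg.ddir h𝒦 _).integrable h𝒦 (ddir_cont hg1 _) ht
    have N : Nul (fun x => ddir (1, 0) g (t, x)
        - 2 * ((gamma3 c v (t, x))⁻¹ * dot3 (Bfield A (t, x)) (grad3 θ (t, x)))) := by
      refine (((((nn 0 1 2).sub (nn 0 2 1)).add ((nn 1 2 0).sub (nn 1 0 2))).add
        ((nn 2 0 1).sub (nn 2 1 0))).sub
        ((flux A0 (hA0.of_le (by norm_num))).smul (2 * c))).congr fun x => ?_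
      rw [hEB, dg]
      simp only [dtB, zero_add, i10, i20, i30, i40]
      simp only [hBi, zero_add, i10, i20, i30, i40]
      ring
    have := N.2
    rw [integral_sub intg (intR.const_mul 2), integral_const_mul] at this
    linarith
  · have N : Nul (fun x =>
        (gamma3 c v (t, x))⁻¹ * dot3 (Bfield A (t, x)) (grad3 θ (t, x))
        + θ (t, x) * dot3 (Bfield A (t, x)) (grad3 (fun q => (gamma3 c v q)⁻¹) (t, x))) := by
      refine (flux (fun q => (gamma3 c v q)⁻¹ * θ q) (hγinv.mul hθ)).congr fun x => ?_
      have hp : ∀ j, grad3 (fun q => (gamma3 c v q)⁻¹ * θ q) (t, x) j =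
          (gamma3 c v (t, x))⁻¹ * grad3 θ (t, x) j
            + θ (t, x) * grad3 (fun q => (gamma3 c v q)⁻¹) (t, x) j :=
        fun j => ddir_mul hγinv hθ _ _
      simp only [dot3, Fin.sum_univ_three, hp]
      ring
    have := N.2
    rw [integral_add intR intS] at this
    linarith
end
end

section
/- Let U : ℝ⁴ → ℝ⁴ be a C¹ vector field generating a global flow φ_s : ℝ⁴ → ℝ⁴ that is jointly C¹ in (s, x) with φ₀ = id and ∂_s φ_s(x) = U(φ_s(x)). Let P : ℝ⁴ → ℝ⁴ be a C¹ covector field and let γ₀ : [0,1] → ℝ⁴ be a C¹ loop (γ₀(0) = γ₀(1)). Then the function s ↦ ∮_{φ_s ∘ γ₀} P is differentiable, and its derivative equals ∮_{φ_s ∘ γ₀} (L_U P), where (L_U P)_ν = Σ_μ (U^μ ∂_μ P_ν + P_μ ∂_ν U^μ). -/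
open MeasureTheory

noncomputable section

abbrev V4 := Fin 4 → ℝ

/-- Partial derivative ∂_μ of a scalar function on ℝ⁴. -/
def pd4 (μ : Fin 4) (f : V4 → ℝ) (x : V4) : ℝ := fderiv ℝ f x (Pi.single μ 1)

/-- Circulation ∮_γ P = ∫₀¹ P_μ(γ(τ)) (dγ^μ/dτ) dτ of a covector field along a loop. -/
def circulation (P : V4 → V4) (γ : ℝ → V4) : ℝ :=
  ∫ τ in (0:ℝ)..1, ∑ μ, P (γ τ) μ * deriv (fun t => γ t μ) τ

/-- Lie derivative of a covector field: (L_U P)_ν = U^μ ∂_μ P_ν + P_μ ∂_ν U^μ. -/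
def lieDeriv1 (U P : V4 → V4) (x : V4) : V4 := fun ν =>
  ∑ μ, (U x μ * pd4 μ (fun y => P y ν) x + P x μ * pd4 ν (fun y => U y μ) x)


theorem aux_param {E : Type*} [NormedAddCommGroup E] [NormedSpace ℝ E]
    (F F' : ℝ → ℝ → E) (hF : ∀ s, Continuous (F s))
    (hF' : Continuous (fun q : ℝ × ℝ => F' q.1 q.2))
    (h : ∀ s t, HasDerivAt (fun s => F s t) (F' s t) s) (a b s₀ : ℝ) :
    HasDerivAt (fun s => ∫ t in a..b, F s t) (∫ t in a..b, F' s₀ t) s₀ := by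
  obtain ⟨C, hC⟩ := ((isCompact_Icc (a := s₀ - 1) (b := s₀ + 1)).prod
    (isCompact_uIcc (a := a) (b := b))).exists_bound_of_continuousOn hF'.continuousOn
  have hF's : Continuous (F' s₀) := hF'.comp (by fun_prop : Continuous fun t : ℝ => (s₀, t))
  refine (intervalIntegral.hasDerivAt_integral_of_dominated_loc_of_deriv_le
    (s := Set.Icc (s₀ - 1) (s₀ + 1)) (bound := fun _ => C) (F := F) (F' := F')
    (Icc_mem_nhds (by linarith) (by linarith)) ?_ ((hF s₀).intervalIntegrable _ _) ?_ ?_ ?_ ?_).2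
  · exact Filter.Eventually.of_forall fun s => (hF s).aestronglyMeasurable
  · exact hF's.aestronglyMeasurable
  · exact Filter.Eventually.of_forall fun t ht x hx =>
      hC (x, t) ⟨hx, Set.uIoc_subset_uIcc ht⟩
  · exact intervalIntegrable_const
  · exact Filter.Eventually.of_forall fun t _ x _ => h x t

theorem aux_fderiv (P : V4 → V4) (hP : ContDiff ℝ 1 P) (x v : V4) (ν : Fin 4) :
    fderiv ℝ P x v ν = ∑ μ, v μ * pd4 μ (fun y => P y ν) x := by
  have hd : DifferentiableAt ℝ P x := hP.differentiable (by norm_num) x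
  have h1 : ∀ μ, pd4 μ (fun y => P y ν) x = fderiv ℝ P x (Pi.single μ 1) ν := by
    intro μ
    have h2 := (hasFDerivAt_pi'.1 hd.hasFDerivAt ν).fderiv
    unfold pd4
    rw [h2]; rfl
  simp only [h1]
  conv_lhs => rw [pi_eq_sum_univ' v]
  simp only [map_sum, map_smul, Finset.sum_apply, Pi.smul_apply, smul_eq_mul]

/-- The derivative of the circulation along a co-moving loop equals the circulation of
    the Lie derivative L_U P. -/
theorem circulation_derivative
    (U : V4 → V4) (hU : ContDiff ℝ 1 U)
    (φ : ℝ → V4 → V4) (hφ : ContDiff ℝ 1 (fun q : ℝ × V4 => φ q.1 q.2))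
    (hφ0 : φ 0 = id)
    (hflow : ∀ s x, HasDerivAt (fun s => φ s x) (U (φ s x)) s)
    (P : V4 → V4) (hP : ContDiff ℝ 1 P)
    (γ0 : ℝ → V4) (hγ0 : ContDiff ℝ 1 γ0) (hloop : γ0 0 = γ0 1) :
    ∀ s : ℝ,
      HasDerivAt (fun s => circulation P (fun τ => φ s (γ0 τ)))
        (circulation (lieDeriv1 U P) (fun τ => φ s (γ0 τ))) s := by
  intro s₀
  set G : ℝ × ℝ → V4 := fun q => φ q.1 (γ0 q.2) with hGdef
  have hG : ContDiff ℝ 1 G :=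
    hφ.comp (contDiff_fst.prodMk (hγ0.comp contDiff_snd) : ContDiff ℝ 1 fun q : ℝ × ℝ => (q.1, γ0 q.2))
  have hGc : Continuous G := hG.continuous
  set W : ℝ × ℝ → V4 := fun q => fderiv ℝ G q (0, 1) with hWdef
  have hWc : Continuous W := (hG.continuous_fderiv (by norm_num)).clm_apply continuous_const
  have hW : ∀ s t, HasDerivAt (fun t => G (s, t)) (W (s, t)) t := by
    intro s t
    have h1 : HasFDerivAt G (fderiv ℝ G (s, t)) (s, t) :=
      (hG.differentiable (by norm_num) _).hasFDerivAt
    exact h1.comp_hasDerivAt t ((hasDerivAt_const t s).prodMk (hasDerivAt_id t))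
  have hUd : Continuous (fderiv ℝ U) := hU.continuous_fderiv (by norm_num)
  have hPd : Continuous (fderiv ℝ P) := hP.continuous_fderiv (by norm_num)
  have hUc := hU.continuous
  have hPc := hP.continuous
  have hGs : ∀ s t, HasDerivAt (fun s => G (s, t)) (U (G (s, t))) s := fun s t => hflow s (γ0 t)
  set K : ℝ × ℝ → V4 := fun q => fderiv ℝ U (G q) (W q) with hKdef
  have hKc : Continuous K := (hUd.comp hGc).clm_apply hWc
  have hWint : ∀ s t, W (s, t) = W (s₀, t) + ∫ r in s₀..s, K (r, t) := by
    intro s t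
    have h1 : HasDerivAt (fun t => ∫ r in s₀..s, U (G (r, t))) (∫ r in s₀..s, K (r, t)) t := by
      refine aux_param (fun t r => U (G (r, t))) (fun t r => K (r, t)) ?_ ?_ ?_ s₀ s t
      · intro t; fun_prop
      · exact hKc.comp continuous_swap
      · intro t r
        have h2 : HasFDerivAt U (fderiv ℝ U (G (r, t))) (G (r, t)) :=
          (hU.differentiable (by norm_num) _).hasFDerivAt
        exact h2.comp_hasDerivAt t (hW r t)
    have h3 : (fun t => G (s, t)) = fun t => G (s₀, t) + ∫ r in s₀..s, U (G (r, t)) := by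
      funext t
      rw [intervalIntegral.integral_eq_sub_of_hasDerivAt (fun r _ => hGs r t)
        ((by fun_prop : Continuous fun r => U (G (r, t))).intervalIntegrable _ _)]
      abel
    have h4 := hW s t
    rw [h3] at h4
    exact h4.unique ((hW s₀ t).add h1)
  have hWs : ∀ s t, HasDerivAt (fun s => W (s, t)) (K (s, t)) s := by
    intro s t
    have h1 : (fun s => W (s, t)) = fun s => W (s₀, t) + ∫ r in s₀..s, K (r, t) := by
      funext s; exact hWint s t
    rw [h1]
    have hc : Continuous fun r => K (r, t) := by fun_prop
    exact (hc.integral_hasStrictDerivAt s₀ s).hasDerivAt.const_add _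
  have hder : ∀ s τ μ, deriv (fun t => φ s (γ0 t) μ) τ = W (s, τ) μ := fun s τ μ =>
    (hasDerivAt_pi.1 (hW s τ) μ).deriv
  have key := aux_param (fun s τ => ∑ μ, P (G (s, τ)) μ * W (s, τ) μ)
    (fun s τ => ∑ μ, (fderiv ℝ P (G (s, τ)) (U (G (s, τ))) μ * W (s, τ) μ
      + P (G (s, τ)) μ * K (s, τ) μ)) ?_ ?_ ?_ 0 1 s₀
  · unfold circulation
    simp only [hder]
    refine HasDerivAt.congr_deriv key ?_
    symm
    apply intervalIntegral.integral_congr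
    intro τ _
    simp only [hKdef, aux_fderiv P hP, aux_fderiv U hU, lieDeriv1]
    change ∑ ν, (∑ μ, (U (G (s₀, τ)) μ * pd4 μ (fun y => P y ν) (G (s₀, τ))
      + P (G (s₀, τ)) μ * pd4 ν (fun y => U y μ) (G (s₀, τ)))) * W (s₀, τ) ν = _
    simp only [Finset.sum_add_distrib, add_mul, Finset.sum_mul, Finset.mul_sum]
    congr 1
    rw [Finset.sum_comm]
    refine Finset.sum_congr rfl fun i _ => Finset.sum_congr rfl fun j _ => ?_
    ring
  · intro s
    fun_prop
  · have h1 : Continuous fun q : ℝ × ℝ => fderiv ℝ P (G q) (U (G q)) :=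
      (hPd.comp hGc).clm_apply (hUc.comp hGc)
    refine continuous_finsetSum _ fun μ _ => ?_
    exact (((continuous_apply μ).comp h1).mul ((continuous_apply μ).comp hWc)).add
      (((continuous_apply μ).comp (hPc.comp hGc)).mul ((continuous_apply μ).comp hKc))
  · intro s t
    have h2 : HasFDerivAt P (fderiv ℝ P (G (s, t))) (G (s, t)) :=
      (hP.differentiable (by norm_num) _).hasFDerivAt
    have h3 := h2.comp_hasDerivAt s (hGs s t)
    refine HasDerivAt.fun_sum fun μ _ => ?_
    exact (hasDerivAt_pi.1 h3 μ).mul (hasDerivAt_pi.1 (hWs s t) μ)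
end
end

section
/- (Circulation law / relativistic Kelvin theorem.) Let c > 0, let U : ℝ⁴ → ℝ⁴ be a C¹ vector field generating a global flow φ_s (jointly C¹ in (s, x), φ₀ = id, ∂_s φ_s(x) = U(φ_s(x))), let P : ℝ⁴ → ℝ⁴ be a C¹ covector field, and let f : ℝ⁴ → ℝ be C¹ with (L_U P)_ν = c⁻¹ ∂_ν f at every point and every ν (i.e., L_U P = c⁻¹ df). Then for every C¹ loop γ₀ : [0,1] → ℝ⁴ (γ₀(0) = γ₀(1)), the circulation Φ(s) = ∮_{φ_s ∘ γ₀} P is independent of s. -/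
open MeasureTheory

noncomputable section

lemma leib_aux {E : Type*} [NormedAddCommGroup E] [NormedSpace ℝ E] (F F' : ℝ → ℝ → E)
    (hF : ∀ x, Continuous (F x)) (hF' : Continuous (Function.uncurry F'))
    (hd : ∀ x t, HasDerivAt (fun x => F x t) (F' x t) x) (a b x₀ : ℝ) :
    HasDerivAt (fun x => ∫ t in a..b, F x t) (∫ t in a..b, F' x₀ t) x₀ := by
  obtain ⟨C, hC⟩ := ((isCompact_closedBall x₀ (1:ℝ)).prod
    (isCompact_uIcc (a := a) (b := b))).exists_bound_of_continuousOn hF'.continuousOn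
  refine (intervalIntegral.hasDerivAt_integral_of_dominated_loc_of_deriv_le
    (bound := fun _ => C) (F' := F') (Metric.closedBall_mem_nhds x₀ one_pos) ?_ ?_ ?_ ?_ ?_ ?_).2
  · exact Filter.Eventually.of_forall fun x => (hF x).aestronglyMeasurable
  · exact (hF x₀).intervalIntegrable _ _
  · exact (hF'.comp (by fun_prop : Continuous fun t : ℝ => (x₀, t))).aestronglyMeasurable
  · refine Filter.Eventually.of_forall fun t ht x hx => ?_
    exact hC (x, t) ⟨hx, Set.uIoc_subset_uIcc ht⟩
  · exact intervalIntegrable_const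
  · exact Filter.Eventually.of_forall fun t _ x _ => hd x t

lemma lin_expand (L : V4 →L[ℝ] ℝ) (v : V4) : L v = ∑ i, v i * L (Pi.single i 1) := by
  conv_lhs => rw [pi_eq_sum_univ' v]
  simp [map_sum]

lemma pd4_comp (P : V4 → V4) (hP : ContDiff ℝ 1 P) (μ ν : Fin 4) (x : V4) :
    pd4 μ (fun y => P y ν) x = fderiv ℝ P x (Pi.single μ 1) ν := by
  unfold pd4
  have h := (hP.differentiable one_ne_zero x).hasFDerivAt
  rw [(hasFDerivAt_pi'.1 h ν).fderiv]
  rfl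

lemma alg_aux (c : ℝ) (U : V4 → V4) (hU : ContDiff ℝ 1 U)
    (P : V4 → V4) (hP : ContDiff ℝ 1 P) (f : V4 → ℝ)
    (heqm : ∀ x ν, lieDeriv1 U P x ν = c⁻¹ * pd4 ν f x) (x v : V4) :
    ∑ ν, (fderiv ℝ P x (U x) ν * v ν + P x ν * fderiv ℝ U x v ν) = c⁻¹ * fderiv ℝ f x v := by
  have e1 : ∀ ν, fderiv ℝ P x (U x) ν = ∑ μ, U x μ * fderiv ℝ P x (Pi.single μ 1) ν := fun ν =>
    lin_expand ((ContinuousLinearMap.proj (R := ℝ) (φ := fun _ : Fin 4 => ℝ) ν).comp (fderiv ℝ P x)) (U x)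
  have e2 : ∀ μ, fderiv ℝ U x v μ = ∑ ν, v ν * fderiv ℝ U x (Pi.single ν 1) μ := fun μ =>
    lin_expand ((ContinuousLinearMap.proj (R := ℝ) (φ := fun _ : Fin 4 => ℝ) μ).comp (fderiv ℝ U x)) v
  have e3 : ∑ ν, v ν * lieDeriv1 U P x ν = c⁻¹ * fderiv ℝ f x v := by
    rw [lin_expand (fderiv ℝ f x) v, Finset.mul_sum]
    refine Finset.sum_congr rfl fun ν _ => ?_
    rw [heqm]; unfold pd4; ring
  rw [← e3]
  simp only [lieDeriv1, pd4_comp P hP, pd4_comp U hU, e1, e2, Fin.sum_univ_four]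
  ring

/-- Relativistic Kelvin circulation theorem: if L_U P = c⁻¹ df, then the circulation
    of P along any co-moving loop is independent of the flow parameter s. -/
theorem relativistic_circulation_law (c : ℝ) (hc : 0 < c)
    (U : V4 → V4) (hU : ContDiff ℝ 1 U)
    (φ : ℝ → V4 → V4) (hφ : ContDiff ℝ 1 (fun q : ℝ × V4 => φ q.1 q.2))
    (hφ0 : φ 0 = id)
    (hflow : ∀ s x, HasDerivAt (fun s => φ s x) (U (φ s x)) s)
    (P : V4 → V4) (hP : ContDiff ℝ 1 P)
    (f : V4 → ℝ) (hf : ContDiff ℝ 1 f)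
    (heqm : ∀ x ν, lieDeriv1 U P x ν = c⁻¹ * pd4 ν f x) :
    ∀ γ0 : ℝ → V4, ContDiff ℝ 1 γ0 → γ0 0 = γ0 1 →
      ∀ s₁ s₂ : ℝ,
        circulation P (fun τ => φ s₁ (γ0 τ)) = circulation P (fun τ => φ s₂ (γ0 τ)) := by
  intro γ hγ hloop
  set Ψ : ℝ × V4 → V4 := fun q => φ q.1 q.2 with hΨ
  set G : ℝ → ℝ → V4 := fun s τ => φ s (γ τ) with hG
  set T : ℝ → ℝ → V4 := fun s τ => fderiv ℝ Ψ (s, γ τ) ((0:ℝ), deriv γ τ) with hTdef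
  have cγ : Continuous γ := hγ.continuous
  have cγ' : Continuous (deriv γ) := hγ.continuous_deriv le_rfl
  have cΨ : Continuous Ψ := hφ.continuous
  have cΨ' : Continuous (fderiv ℝ Ψ) := hφ.continuous_fderiv one_ne_zero
  have cU' : Continuous (fderiv ℝ U) := hU.continuous_fderiv one_ne_zero
  have cP' : Continuous (fderiv ℝ P) := hP.continuous_fderiv one_ne_zero
  have cf' : Continuous (fderiv ℝ f) := hf.continuous_fderiv one_ne_zero
  have cU := hU.continuous
  have cP := hP.continuous
  have cG : Continuous (fun p : ℝ × ℝ => G p.1 p.2) :=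
    cΨ.comp (by fun_prop : Continuous fun p : ℝ × ℝ => (p.1, γ p.2))
  have cT : Continuous (fun p : ℝ × ℝ => T p.1 p.2) :=
    (cΨ'.comp (by fun_prop : Continuous fun p : ℝ × ℝ => (p.1, γ p.2))).clm_apply
      (by fun_prop : Continuous fun p : ℝ × ℝ => ((0:ℝ), deriv γ p.2))
  have cW : Continuous (fun p : ℝ × ℝ => fderiv ℝ U (G p.1 p.2) (T p.1 p.2)) :=
    (cU'.comp cG).clm_apply cT
  have cfG : Continuous (fun p : ℝ × ℝ => c⁻¹ * fderiv ℝ f (G p.1 p.2) (T p.1 p.2)) :=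
    continuous_const.mul ((cf'.comp cG).clm_apply cT)
  have hT : ∀ s τ, HasDerivAt (fun τ => G s τ) (T s τ) τ := by
    intro s τ
    have h1 : HasDerivAt (fun τ => (s, γ τ)) ((0:ℝ), deriv γ τ) τ :=
      (hasDerivAt_const τ s).prodMk (hγ.differentiable one_ne_zero τ).hasDerivAt
    exact ((hφ.differentiable one_ne_zero (s, γ τ)).hasFDerivAt).comp_hasDerivAt τ h1
  have hGs : ∀ s τ, HasDerivAt (fun s => G s τ) (U (G s τ)) s := fun s τ => hflow s (γ τ)
  have hTint : ∀ s τ, T s τ = T 0 τ + ∫ r in (0:ℝ)..s, fderiv ℝ U (G r τ) (T r τ) := by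
    intro s τ
    have h1 := leib_aux (fun τ r => U (G r τ)) (fun τ r => fderiv ℝ U (G r τ) (T r τ))
      (fun τ => cU.comp (cG.comp (by fun_prop : Continuous fun r : ℝ => (r, τ))))
      (cW.comp continuous_swap)
      (fun τ r => ((hU.differentiable one_ne_zero (G r τ)).hasFDerivAt).comp_hasDerivAt τ (hT r τ))
      0 s τ
    have h2 : (fun τ => ∫ r in (0:ℝ)..s, U (G r τ)) = fun τ => G s τ - G 0 τ := by
      funext τ
      exact intervalIntegral.integral_eq_sub_of_hasDerivAt (fun r _ => hGs r τ)
        ((cU.comp (cG.comp (by fun_prop : Continuous fun r : ℝ => (r, τ)))).intervalIntegrable _ _)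
    rw [h2] at h1
    rw [h1.unique ((hT s τ).sub (hT 0 τ))]
    abel
  have hTs : ∀ s τ, HasDerivAt (fun s => T s τ) (fderiv ℝ U (G s τ) (T s τ)) s := by
    intro s τ
    have h1 : (fun s => T s τ) =
        fun s => T 0 τ + ∫ r in (0:ℝ)..s, fderiv ℝ U (G r τ) (T r τ) := funext fun s => hTint s τ
    rw [h1]
    have cc : Continuous fun r => fderiv ℝ U (G r τ) (T r τ) :=
      cW.comp (by fun_prop : Continuous fun r : ℝ => (r, τ))
    exact (cc.integral_hasStrictDerivAt 0 s).hasDerivAt.const_add _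
  have hcirc : ∀ s, circulation P (fun τ => φ s (γ τ)) =
      ∫ τ in (0:ℝ)..1, ∑ μ, P (G s τ) μ * T s τ μ := by
    intro s
    unfold circulation
    congr 1
    funext τ
    refine Finset.sum_congr rfl fun μ _ => ?_
    rw [(hasDerivAt_pi.1 (hT s τ) μ).deriv]
  have hB : ∀ s τ, HasDerivAt (fun s => ∑ μ, P (G s τ) μ * T s τ μ)
      (c⁻¹ * fderiv ℝ f (G s τ) (T s τ)) s := by
    intro s τ
    rw [← alg_aux c U hU P hP f heqm]
    refine HasDerivAt.fun_sum fun μ _ => ?_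
    have hPG := ((hP.differentiable one_ne_zero (G s τ)).hasFDerivAt).comp_hasDerivAt s (hGs s τ)
    exact (hasDerivAt_pi.1 hPG μ).mul (hasDerivAt_pi.1 (hTs s τ) μ)
  have hmain : ∀ s, HasDerivAt (fun s => circulation P (fun τ => φ s (γ τ))) 0 s := by
    intro s
    have h0 : ∫ τ in (0:ℝ)..1, c⁻¹ * fderiv ℝ f (G s τ) (T s τ) = 0 := by
      rw [intervalIntegral.integral_eq_sub_of_hasDerivAt (f := fun τ => c⁻¹ * f (G s τ))]
      · simp [hG, hloop]
      · intro τ _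
        exact (((hf.differentiable one_ne_zero (G s τ)).hasFDerivAt).comp_hasDerivAt τ
          (hT s τ)).const_mul _
      · exact (cfG.comp (by fun_prop : Continuous fun r : ℝ => (s, r))).intervalIntegrable _ _
    rw [← h0, funext hcirc]
    refine leib_aux (fun s τ => ∑ μ, P (G s τ) μ * T s τ μ)
      (fun s τ => c⁻¹ * fderiv ℝ f (G s τ) (T s τ)) (fun s => ?_) cfG hB 0 1 s
    have c1 : Continuous fun τ => P (G s τ) :=
      cP.comp (cG.comp (by fun_prop : Continuous fun r : ℝ => (s, r)))
    have c2 : Continuous fun τ => T s τ :=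
      cT.comp (by fun_prop : Continuous fun r : ℝ => (s, r))
    exact continuous_finsetSum _ fun μ _ =>
      ((continuous_apply μ).comp c1).mul ((continuous_apply μ).comp c2)
  intro s₁ s₂
  exact is_const_of_deriv_eq_zero (fun s => (hmain s).differentiableAt)
    (fun s => (hmain s).deriv) s₁ s₂
end
end

section
/- (Relativistic vorticity equation.) Let c > 0, let P : ℝ⁴ → ℝ⁴ be a C² covector field, θ : ℝ⁴ → ℝ be C², and U : ℝ⁴ → ℝ⁴ be C¹. Set M_{μν} = ∂_μ P_ν − ∂_ν P_μ. If the equation of motion Σ_μ U^μ M_{μν} = −c⁻¹ ∂_ν θ holds at every point for every ν, then the Lie derivative of the vorticity 2-form vanishes: Σ_α (U^α ∂_α M_{μν} + M_{αν} ∂_μ U^α + M_{μα} ∂_ν U^α) = 0 at every point for all μ, ν. -/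
open MeasureTheory

noncomputable section

theorem pd4_diff (f : V4 → ℝ) (hf : ContDiff ℝ 2 f) (μ : Fin 4) :
    Differentiable ℝ (pd4 μ f) := by
  have h : ContDiff ℝ 1 (fderiv ℝ f) := hf.fderiv_right (by norm_num)
  have h2 : Differentiable ℝ (fderiv ℝ f) := h.differentiable (by norm_num)
  exact fun x => (h2 x).clm_apply (differentiableAt_const _)

theorem pd4_comm (f : V4 → ℝ) (hf : ContDiff ℝ 2 f) (μ ν : Fin 4) (x : V4) :
    pd4 μ (pd4 ν f) x = pd4 ν (pd4 μ f) x := by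
  have h : ContDiff ℝ 1 (fderiv ℝ f) := hf.fderiv_right (by norm_num)
  have h2 : Differentiable ℝ (fderiv ℝ f) := h.differentiable (by norm_num)
  have key : ∀ a b : Fin 4, pd4 a (pd4 b f) x
      = fderiv ℝ (fderiv ℝ f) x (Pi.single a 1) (Pi.single b 1) := by
    intro a b
    have e : pd4 b f = fun y => fderiv ℝ f y (Pi.single b 1) := rfl
    rw [e, pd4, fderiv_clm_apply (h2 x) (differentiableAt_const _)]
    simp
  rw [key, key]
  exact (hf.contDiffAt.isSymmSndFDerivAt (by simp)).eq _ _

theorem pd4_sub (f g : V4 → ℝ) (hf : Differentiable ℝ f) (hg : Differentiable ℝ g)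
    (μ : Fin 4) (x : V4) : pd4 μ (fun y => f y - g y) x = pd4 μ f x - pd4 μ g x := by
  unfold pd4
  rw [fderiv_fun_sub (hf x) (hg x)]; rfl

theorem pd4_mul (f g : V4 → ℝ) (hf : Differentiable ℝ f) (hg : Differentiable ℝ g)
    (μ : Fin 4) (x : V4) :
    pd4 μ (fun y => f y * g y) x = f x * pd4 μ g x + g x * pd4 μ f x := by
  unfold pd4
  rw [fderiv_fun_mul (hf x) (hg x)]; rfl

theorem pd4_sum (f : Fin 4 → V4 → ℝ) (hf : ∀ i, Differentiable ℝ (f i))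
    (μ : Fin 4) (x : V4) : pd4 μ (fun y => ∑ i, f i y) x = ∑ i, pd4 μ (f i) x := by
  unfold pd4
  rw [fderiv_fun_sum (fun i _ => hf i x)]; simp

theorem pd4_const_mul (a : ℝ) (f : V4 → ℝ) (hf : Differentiable ℝ f)
    (μ : Fin 4) (x : V4) : pd4 μ (fun y => a * f y) x = a * pd4 μ f x := by
  unfold pd4
  rw [fderiv_const_mul (hf x)]; rfl

/-- Relativistic vorticity equation: if U^μ M_{μν} = −c⁻¹∂_νθ with M_{μν} = ∂_μP_ν − ∂_νP_μ,
    then the Lie derivative of the vorticity 2-form vanishes. -/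
theorem vorticity_lie_derivative_vanishes (c : ℝ) (hc : 0 < c)
    (P : V4 → V4) (hP : ContDiff ℝ 2 P)
    (θ : V4 → ℝ) (hθ : ContDiff ℝ 2 θ)
    (U : V4 → V4) (hU : ContDiff ℝ 1 U)
    (M : Fin 4 → Fin 4 → V4 → ℝ)
    (hM : ∀ μ ν x, M μ ν x = pd4 μ (fun y => P y ν) x - pd4 ν (fun y => P y μ) x)
    (heqm : ∀ x ν, (∑ μ, U x μ * M μ ν x) = -c⁻¹ * pd4 ν θ x) :
    ∀ x, ∀ μ ν : Fin 4,
      (∑ α, (U x α * pd4 α (M μ ν) x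
        + M α ν x * pd4 μ (fun y => U y α) x
        + M μ α x * pd4 ν (fun y => U y α) x)) = 0 := by
  have hPc : ∀ i, ContDiff ℝ 2 (fun y => P y i) := fun i => contDiff_pi.1 hP i
  have hUc : ∀ i, Differentiable ℝ (fun y => U y i) := fun i =>
    (contDiff_pi.1 hU i).differentiable (by norm_num)
  have hM' : ∀ μ ν, M μ ν = fun x => pd4 μ (fun y => P y ν) x - pd4 ν (fun y => P y μ) x :=
    fun μ ν => funext (hM μ ν)
  have hMd : ∀ μ ν, Differentiable ℝ (M μ ν) := by
    intro μ ν
    rw [hM']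
    exact (pd4_diff _ (hPc ν) μ).sub (pd4_diff _ (hPc μ) ν)
  have hdM : ∀ α μ ν x, pd4 α (M μ ν) x
      = pd4 α (pd4 μ (fun y => P y ν)) x - pd4 α (pd4 ν (fun y => P y μ)) x := by
    intro α μ ν x
    rw [hM', pd4_sub _ _ (pd4_diff _ (hPc ν) μ) (pd4_diff _ (hPc μ) ν)]
  have hd : ∀ x μ ν, (∑ α, (U x α * pd4 μ (M α ν) x + M α ν x * pd4 μ (fun y => U y α) x))
      = -c⁻¹ * pd4 μ (pd4 ν θ) x := by
    intro x μ ν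
    rw [← pd4_const_mul _ _ (pd4_diff θ hθ ν), ← funext (fun y => heqm y ν),
      pd4_sum (fun i y => U y i * M i ν y) (fun i => (hUc i).mul (hMd i ν))]
    exact Finset.sum_congr rfl fun i _ => (pd4_mul _ _ (hUc i) (hMd i ν) μ x).symm
  intro x μ ν
  have h1 := hd x μ ν
  have h2 := hd x ν μ
  rw [pd4_comm θ hθ ν μ x, ← h1, ← sub_eq_zero, ← Finset.sum_sub_distrib] at h2
  rw [← neg_eq_zero, ← Finset.sum_neg_distrib, ← h2]
  refine Finset.sum_congr rfl fun α _ => ?_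
  rw [hdM, hdM, hdM, hM α ν, hM μ α, hM α μ, pd4_comm _ (hPc α) ν μ,
    pd4_comm _ (hPc ν) α μ, pd4_comm _ (hPc μ) α ν]
  ring
end
end

section
/- (Vortex motion / frozen-in support.) Let c > 0, let U : ℝ⁴ → ℝ⁴ be a C¹ vector field generating a global flow φ_s (jointly C¹ in (s, x), each φ_s a diffeomorphism of ℝ⁴, φ₀ = id, ∂_s φ_s(x) = U(φ_s(x))), let P : ℝ⁴ → ℝ⁴ be C² and θ : ℝ⁴ → ℝ be C², and suppose the equation of motion Σ_μ U^μ M_{μν} = −c⁻¹ ∂_ν θ holds everywhere, where M_{μν} = ∂_μ P_ν − ∂_ν P_μ. Let Ξ₀ = {x ∈ ℝ⁴ : x⁰ = 0}, let supp M denote the closure of {x : M(x) ≠ 0}, and let S₀ = supp M ∩ Ξ₀. Then for every s ∈ ℝ, supp M ∩ φ_s(Ξ₀) = φ_s(S₀). -/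
open MeasureTheory

noncomputable section

open Set Filter Topology in
theorem aux_flow_unique (U : V4 → V4) (hU : ContDiff ℝ 1 U) (f g : ℝ → V4)
    (hf : ∀ t, HasDerivAt f (U (f t)) t) (hg : ∀ t, HasDerivAt g (U (g t)) t)
    (h0 : f 0 = g 0) (t : ℝ) : f t = g t := by
  have hfc : Continuous f := continuous_iff_continuousAt.2 fun t => (hf t).continuousAt
  have hgc : Continuous g := continuous_iff_continuousAt.2 fun t => (hg t).continuousAt
  set I : Set ℝ := Icc (-|t| - 1) (|t| + 1) with hI
  have hK : IsCompact (f '' I ∪ g '' I) :=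
    (isCompact_Icc.image hfc).union (isCompact_Icc.image hgc)
  obtain ⟨K, hK'⟩ := LocallyLipschitzOn.exists_lipschitzOnWith_of_compact hK
    (hU.locallyLipschitz.locallyLipschitzOn)
  have h1 : t ∈ Ioo (-|t| - 1) (|t| + 1) := by
    constructor <;> linarith [neg_abs_le t, le_abs_self t]
  have h2 : (0:ℝ) ∈ Ioo (-|t| - 1) (|t| + 1) := by
    constructor <;> linarith [abs_nonneg t]
  exact ODE_solution_unique_of_mem_Ioo (v := fun _ => U) (s := fun _ => f '' I ∪ g '' I)
    (K := K) (fun _ _ => hK') h2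
    (fun r hr => ⟨hf r, Or.inl ⟨r, Ioo_subset_Icc_self hr, rfl⟩⟩)
    (fun r hr => ⟨hg r, Or.inr ⟨r, Ioo_subset_Icc_self hr, rfl⟩⟩) h0 h1

open Set Filter Topology in
theorem aux_variational
    (U : V4 → V4) (hU : ContDiff ℝ 1 U)
    (φ : ℝ → V4 → V4) (hφ : ContDiff ℝ 1 (fun q : ℝ × V4 => φ q.1 q.2))
    (hφ0 : φ 0 = id)
    (hflow : ∀ s x, HasDerivAt (fun s => φ s x) (U (φ s x)) s) (x : V4) (s : ℝ) :
    HasDerivAt (fun s => fderiv ℝ (φ s) x)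
      ((fderiv ℝ U (φ s x)).comp (fderiv ℝ (φ s) x)) s := by
  set L : ℝ × V4 → (V4 →L[ℝ] V4) := fun q =>
    (fderiv ℝ (fun q : ℝ × V4 => φ q.1 q.2) q).comp (ContinuousLinearMap.inr ℝ ℝ V4) with hL
  have hLc : Continuous L := (hφ.continuous_fderiv one_ne_zero).clm_comp continuous_const
  have hD : ∀ t y, HasFDerivAt (φ t) (L (t, y)) y := by
    intro t y
    have h1 := (hφ.differentiable one_ne_zero (t, y)).hasFDerivAt
    exact HasFDerivAt.comp y h1 (hasFDerivAt_prodMk_right t y)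
  have hfd : ∀ t y, fderiv ℝ (φ t) y = L (t, y) := fun t y => (hD t y).fderiv
  simp only [hfd]
  have hφc : Continuous (fun q : ℝ × V4 => φ q.1 q.2) := hφ.continuous
  set F' : V4 → ℝ → (V4 →L[ℝ] V4) := fun y t => (fderiv ℝ U (φ t y)).comp (L (t, y)) with hF'
  have hF'c : Continuous (fun q : ℝ × V4 => F' q.2 q.1) :=
    ((hU.continuous_fderiv one_ne_zero).comp hφc).clm_comp hLc
  have hF'x : ∀ y, Continuous (F' y) := fun y =>
    hF'c.comp (continuous_id.prodMk continuous_const)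
  have hFx : ∀ y, Continuous (fun t => U (φ t y)) := fun y =>
    hU.continuous.comp (hφc.comp (continuous_id.prodMk continuous_const))
  have hint : ∀ t y, φ t y = y + ∫ r in (0:ℝ)..t, U (φ r y) := by
    intro t y
    have := intervalIntegral.integral_eq_sub_of_hasDerivAt (a := 0) (b := t)
      (fun r _ => hflow r y) ((hFx y).intervalIntegrable _ _)
    rw [this, hφ0]; simp
  have key : ∀ t, L (t, x) = ContinuousLinearMap.id ℝ V4 + ∫ r in (0:ℝ)..t, F' x r := by
    intro t
    obtain ⟨C, hC⟩ := (isCompact_uIcc (a := (0:ℝ)) (b := t)).prod (isCompact_closedBall x 1)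
      |>.exists_bound_of_continuousOn hF'c.continuousOn
    have h1 : HasFDerivAt (fun y => ∫ r in (0:ℝ)..t, U (φ r y)) (∫ r in (0:ℝ)..t, F' x r) x := by
      refine intervalIntegral.hasFDerivAt_integral_of_dominated_of_fderiv_le
        (F := fun y r => U (φ r y)) (F' := F') (bound := fun _ => C)
        (Metric.closedBall_mem_nhds x one_pos)
        (Eventually.of_forall fun y => (hFx y).aestronglyMeasurable)
        ((hFx x).intervalIntegrable _ _) (hF'x x).aestronglyMeasurable
        (Eventually.of_forall fun r hr y hy => hC (r, y) ⟨uIoc_subset_uIcc hr, hy⟩)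
        intervalIntegrable_const
        (Eventually.of_forall fun r hr y hy => ?_)
      exact ((hU.differentiable one_ne_zero _).hasFDerivAt).comp y (hD r y)
    have h2 : HasFDerivAt (φ t) (ContinuousLinearMap.id ℝ V4 + ∫ r in (0:ℝ)..t, F' x r) x := by
      have : φ t = fun y => y + ∫ r in (0:ℝ)..t, U (φ r y) := funext (hint t)
      rw [this]
      exact (hasFDerivAt_id x).add h1
    exact (hD t x).unique h2
  have : (fun t => L (t, x)) = fun t => ContinuousLinearMap.id ℝ V4 + ∫ r in (0:ℝ)..t, F' x r :=
    funext key
  rw [this]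
  have h3 := intervalIntegral.integral_hasDerivAt_right ((hF'x x).intervalIntegrable 0 s)
    ((hF'x x).stronglyMeasurableAtFilter _ _) (hF'x x).continuousAt
  exact h3.const_add _

theorem aux_lie (c : ℝ) (U : V4 → V4) (hU : ContDiff ℝ 1 U)
    (Q : V4 → V4 →L[ℝ] ℝ) (hQ : ContDiff ℝ 2 Q) (θ : V4 → ℝ) (hθ : ContDiff ℝ 2 θ)
    (h : ∀ x w, fderiv ℝ Q x (U x) w - fderiv ℝ Q x w (U x) = c * fderiv ℝ θ x w)
    (x v w : V4) :
    (fderiv ℝ (fderiv ℝ Q) x (U x) v w - fderiv ℝ (fderiv ℝ Q) x (U x) w v)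
    + (fderiv ℝ Q x (fderiv ℝ U x v) w - fderiv ℝ Q x w (fderiv ℝ U x v))
    + (fderiv ℝ Q x v (fderiv ℝ U x w) - fderiv ℝ Q x (fderiv ℝ U x w) v) = 0 := by
  have hQ' : HasFDerivAt (fderiv ℝ Q) (fderiv ℝ (fderiv ℝ Q) x) x :=
    ((hQ.fderiv_right (m := 1) (by norm_num)).differentiable one_ne_zero x).hasFDerivAt
  have hθ' : HasFDerivAt (fderiv ℝ θ) (fderiv ℝ (fderiv ℝ θ) x) x :=
    ((hθ.fderiv_right (m := 1) (by norm_num)).differentiable one_ne_zero x).hasFDerivAt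
  have hU' : HasFDerivAt U (fderiv ℝ U x) x := (hU.differentiable one_ne_zero x).hasFDerivAt
  have sQ : ∀ a b, fderiv ℝ (fderiv ℝ Q) x a b = fderiv ℝ (fderiv ℝ Q) x b a := fun a b =>
    (hQ.contDiffAt.isSymmSndFDerivAt (by simp)) a b
  have sθ : ∀ a b, fderiv ℝ (fderiv ℝ θ) x a b = fderiv ℝ (fderiv ℝ θ) x b a := fun a b =>
    (hθ.contDiffAt.isSymmSndFDerivAt (by simp)) a b
  have key : ∀ a b : V4, fderiv ℝ (fderiv ℝ Q) x a (U x) b + fderiv ℝ Q x (fderiv ℝ U x a) b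
      - (fderiv ℝ (fderiv ℝ Q) x a b (U x) + fderiv ℝ Q x b (fderiv ℝ U x a))
      = c * fderiv ℝ (fderiv ℝ θ) x a b := by
    intro a b
    have e1 := (hQ'.clm_apply hU').clm_apply (hasFDerivAt_const b x)
    have e2 := (hQ'.clm_apply (hasFDerivAt_const b x)).clm_apply hU'
    have e3 := (hθ'.clm_apply (hasFDerivAt_const b x)).const_mul c
    have e4 := e1.sub e2
    have : (fun y => fderiv ℝ Q y (U y) b - fderiv ℝ Q y b (U y))
        = fun y => c * fderiv ℝ θ y b := funext fun y => h y b
    have e5 := (e4.congr_of_eventuallyEq (f₁ := fun y => c * fderiv ℝ θ y b)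
      (Filter.Eventually.of_forall fun y => (h y b).symm)).unique e3
    have e6 := congrArg (fun T => T a) e5
    simp at e6
    linarith
  have k1 := key v w
  have k2 := key w v
  rw [sθ w v] at k2
  rw [sQ (U x) v, sQ (U x) w]
  rw [sQ w v] at k2
  linarith

theorem aux_const (c : ℝ) (U : V4 → V4) (hU : ContDiff ℝ 1 U)
    (φ : ℝ → V4 → V4) (hφ : ContDiff ℝ 1 (fun q : ℝ × V4 => φ q.1 q.2))
    (hφ0 : φ 0 = id)
    (hflow : ∀ s x, HasDerivAt (fun s => φ s x) (U (φ s x)) s)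
    (Q : V4 → V4 →L[ℝ] ℝ) (hQ : ContDiff ℝ 2 Q) (θ : V4 → ℝ) (hθ : ContDiff ℝ 2 θ)
    (h : ∀ x w, fderiv ℝ Q x (U x) w - fderiv ℝ Q x w (U x) = c * fderiv ℝ θ x w)
    (x v w : V4) (s : ℝ) :
    fderiv ℝ Q (φ s x) (fderiv ℝ (φ s) x v) (fderiv ℝ (φ s) x w)
      - fderiv ℝ Q (φ s x) (fderiv ℝ (φ s) x w) (fderiv ℝ (φ s) x v)
    = fderiv ℝ Q x v w - fderiv ℝ Q x w v := by
  set A : ℝ → ℝ := fun s => fderiv ℝ Q (φ s x) (fderiv ℝ (φ s) x v) (fderiv ℝ (φ s) x w)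
      - fderiv ℝ Q (φ s x) (fderiv ℝ (φ s) x w) (fderiv ℝ (φ s) x v) with hA
  have hd : ∀ s, HasDerivAt A 0 s := by
    intro s
    have hQ' : HasFDerivAt (fderiv ℝ Q) (fderiv ℝ (fderiv ℝ Q) (φ s x)) (φ s x) :=
      ((hQ.fderiv_right (m := 1) (by norm_num)).differentiable one_ne_zero _).hasFDerivAt
    have q : HasDerivAt (fun r => fderiv ℝ Q (φ r x))
        (fderiv ℝ (fderiv ℝ Q) (φ s x) (U (φ s x))) s :=
      HasFDerivAt.comp_hasDerivAt (l := fderiv ℝ Q) (f := fun r => φ r x) s hQ' (hflow s x)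
    have J := aux_variational U hU φ hφ hφ0 hflow x s
    have Jv := J.clm_apply (hasDerivAt_const s v)
    have Jw := J.clm_apply (hasDerivAt_const s w)
    have e := ((q.clm_apply Jv).clm_apply Jw).sub ((q.clm_apply Jw).clm_apply Jv)
    have l := aux_lie c U hU Q hQ θ hθ h (φ s x) (fderiv ℝ (φ s) x v) (fderiv ℝ (φ s) x w)
    refine (e.congr_deriv ?_)
    simp
    linarith
  have := is_const_of_deriv_eq_zero (fun s => (hd s).differentiableAt) (fun s => (hd s).deriv) s 0
  simpa [hA, hφ0] using this

/-- Vortex motion / frozen-in support: under the barotropic equation of motion, the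
    support of the vorticity intersected with the transported plane φ_s(Ξ₀) is the
    transport of its initial intersection S₀ = supp M ∩ Ξ₀. -/
theorem vortex_support_transport (c : ℝ) (hc : 0 < c)
    (U : V4 → V4) (hU : ContDiff ℝ 1 U)
    (φ : ℝ → V4 → V4) (hφ : ContDiff ℝ 1 (fun q : ℝ × V4 => φ q.1 q.2))
    (hφ0 : φ 0 = id)
    (hflow : ∀ s x, HasDerivAt (fun s => φ s x) (U (φ s x)) s)
    (hdiffeo : ∀ s, Function.Bijective (φ s))
    (P : V4 → V4) (hP : ContDiff ℝ 2 P)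
    (θ : V4 → ℝ) (hθ : ContDiff ℝ 2 θ)
    (M : Fin 4 → Fin 4 → V4 → ℝ)
    (hM : ∀ μ ν x, M μ ν x = pd4 μ (fun y => P y ν) x - pd4 ν (fun y => P y μ) x)
    (heqm : ∀ x ν, (∑ μ, U x μ * M μ ν x) = -c⁻¹ * pd4 ν θ x) :
    ∀ s : ℝ,
      closure {x : V4 | ∃ μ ν, M μ ν x ≠ 0} ∩ (φ s '' {x : V4 | x 0 = 0})
        = φ s '' (closure {x : V4 | ∃ μ ν, M μ ν x ≠ 0} ∩ {x : V4 | x 0 = 0}) := by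
  set N : Set V4 := {x : V4 | ∃ μ ν, M μ ν x ≠ 0} with hN
  -- the one-form with values in the dual
  set T : V4 →L[ℝ] V4 →L[ℝ] ℝ :=
    ∑ μ, (ContinuousLinearMap.proj (R := ℝ) (φ := fun _ : Fin 4 => ℝ) μ).smulRight
      (ContinuousLinearMap.proj (R := ℝ) (φ := fun _ : Fin 4 => ℝ) μ) with hT
  have hTa : ∀ a b : V4, T a b = ∑ μ, a μ * b μ := by
    intro a b; simp [hT, ContinuousLinearMap.sum_apply]
  set Q : V4 → V4 →L[ℝ] ℝ := fun x => T (P x) with hQdef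
  have hQ : ContDiff ℝ 2 Q := T.contDiff.comp hP
  have hPd : ∀ x, DifferentiableAt ℝ P x := fun x => hP.differentiable two_ne_zero x
  have hQf : ∀ x a b, fderiv ℝ Q x a b = ∑ ν, fderiv ℝ P x a ν * b ν := by
    intro x a b
    have : HasFDerivAt Q (T.comp (fderiv ℝ P x)) x := T.hasFDerivAt.comp x (hPd x).hasFDerivAt
    rw [this.fderiv]
    simp [hTa]
  have hpd : ∀ μ ν x, pd4 μ (fun y => P y ν) x = fderiv ℝ P x (Pi.single μ 1) ν := by
    intro μ ν x
    unfold pd4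
    have := (hasFDerivAt_pi'.1 (hPd x).hasFDerivAt) ν
    rw [this.fderiv]; rfl
  have hexp : ∀ v : V4, v = ∑ μ, v μ • (Pi.single μ (1:ℝ) : V4) := fun v => pi_eq_sum_univ' v
  have hMQ : ∀ μ ν x, M μ ν x = fderiv ℝ Q x (Pi.single μ 1) (Pi.single ν 1)
      - fderiv ℝ Q x (Pi.single ν 1) (Pi.single μ 1) := by
    intro μ ν x
    rw [hM, hpd, hpd, hQf, hQf]
    simp [Pi.single_apply]
  have hlin : ∀ x (v w : V4), fderiv ℝ Q x v w - fderiv ℝ Q x w v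
      = ∑ μ, ∑ ν, v μ * w ν * M μ ν x := by
    intro x v w
    simp only [hMQ, mul_sub, Finset.sum_sub_distrib]
    congr 1
    · conv_lhs => rw [hexp v, hexp w]
      simp only [map_sum, map_smul, ContinuousLinearMap.sum_apply, ContinuousLinearMap.smul_apply,
        smul_eq_mul, Finset.mul_sum]
      rw [Finset.sum_comm]
      exact Finset.sum_congr rfl fun i _ => Finset.sum_congr rfl fun j _ => by ring
    · conv_lhs => rw [hexp v, hexp w]
      simp only [map_sum, map_smul, ContinuousLinearMap.sum_apply, ContinuousLinearMap.smul_apply,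
        smul_eq_mul, Finset.mul_sum]
      exact Finset.sum_congr rfl fun i _ => Finset.sum_congr rfl fun j _ => by ring
  have hmot : ∀ x w, fderiv ℝ Q x (U x) w - fderiv ℝ Q x w (U x)
      = (-c⁻¹) * fderiv ℝ θ x w := by
    intro x w
    rw [hlin, Finset.sum_comm]
    conv_rhs => rw [hexp w]
    simp only [map_sum, map_smul, smul_eq_mul, Finset.mul_sum]
    refine Finset.sum_congr rfl fun ν _ => ?_
    have := heqm x ν
    unfold pd4 at this
    rw [mul_left_comm, ← this, Finset.mul_sum]
    exact Finset.sum_congr rfl fun i _ => by ring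
  have hfwd : ∀ s x, x ∈ N → φ s x ∈ N := by
    rintro s x ⟨μ, ν, hne⟩
    by_contra hcon
    have hz : ∀ μ ν, M μ ν (φ s x) = 0 := by
      intro a b
      by_contra hab
      exact hcon ⟨a, b, hab⟩
    apply hne
    rw [hMQ, ← aux_const (-c⁻¹) U hU φ hφ hφ0 hflow Q hQ θ hθ hmot x _ _ s, hlin]
    simp [hz]
  have hinv : ∀ s x, φ (-s) (φ s x) = x := by
    intro s x
    have := aux_flow_unique U hU (fun r => φ r (φ s x)) (fun r => φ (r + s) x)
      (fun t => hflow t _) (fun t => (hflow (t + s) x).comp_add_const t s)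
      (by simp [hφ0]) (-s)
    simpa [hφ0] using this
  have hcont : ∀ s, Continuous (φ s) := fun s =>
    hφ.continuous.comp (continuous_const.prodMk continuous_id)
  intro s
  let e : V4 ≃ₜ V4 :=
    { toFun := φ s
      invFun := φ (-s)
      left_inv := hinv s
      right_inv := fun y => by simpa using hinv (-s) y
      continuous_toFun := hcont s
      continuous_invFun := hcont (-s) }
  have hNN : φ s '' N = N := by
    apply Set.Subset.antisymm
    · rintro _ ⟨x, hx, rfl⟩; exact hfwd s x hx
    · intro y hy
      exact ⟨φ (-s) y, hfwd (-s) y hy, by simpa using hinv (-s) y⟩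
  have hcl : φ s '' closure N = closure N := by
    have := e.image_closure N
    change φ s '' closure N = closure (φ s '' N) at this
    rw [this, hNN]
  rw [Set.image_inter (hdiffeo s).injective, hcl]
end
end

section
/- (Relativistic helicity conservation.) Let c > 0, let U : ℝ⁴ → ℝ⁴ be a C² vector field generating a global flow φ_s (jointly C² in (s, x), each φ_s a C² diffeomorphism of ℝ⁴, φ₀ = id, ∂_s φ_s(x) = U(φ_s(x))), let P : ℝ⁴ → ℝ⁴ be a C² covector field and f : ℝ⁴ → ℝ be C¹ with Σ_μ (U^μ ∂_μ P_ν + P_μ ∂_ν U^μ) = c⁻¹ ∂_ν f everywhere for every ν (i.e., L_U P = c⁻¹ df). Set M_{μν} = ∂_μ P_ν − ∂_ν P_μ. Let V₀ ⊂ ℝ³ be a compact set with C¹ boundary such that the closure of {y ∈ ℝ³ : M(0, y) ≠ 0} is contained in the interior of V₀. Define ψ_s : ℝ³ → ℝ⁴ by ψ_s(y) = φ_s(0, y¹, y², y³), and define the relativistic helicity 𝔠(s) = ∫_{V₀} W(ψ_s(y))(∂ψ_s/∂y¹, ∂ψ_s/∂y², ∂ψ_s/∂y³) d³y, where for x ∈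 ℝ⁴ the alternating trilinear form W(x) is W(x)(u, v, w) = (P_μ(x)u^μ)(M_{αβ}(x)v^α w^β) + (P_μ(x)v^μ)(M_{αβ}(x)w^α u^β) + (P_μ(x)w^μ)(M_{αβ}(x)u^α v^β). Then 𝔠(s) is independent of s. -/
open MeasureTheory

noncomputable section

/-- Vorticity 2-form components M_{μν} = ∂_μ P_ν − ∂_ν P_μ of a covector field P. -/
def vort (P : V4 → V4) (μ ν : Fin 4) (x : V4) : ℝ :=
  pd4 μ (fun y => P y ν) x - pd4 ν (fun y => P y μ) x

/-- The helicity 3-form P ∧ dP evaluated on three tangent vectors: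
    W(u,v,w) = P(u)M(v,w) + P(v)M(w,u) + P(w)M(u,v). -/
def Wform (P : V4 → V4) (x : V4) (u v w : V4) : ℝ :=
  (∑ μ, P x μ * u μ) * (∑ α, ∑ β, vort P α β x * v α * w β)
    + (∑ μ, P x μ * v μ) * (∑ α, ∑ β, vort P α β x * w α * u β)
    + (∑ μ, P x μ * w μ) * (∑ α, ∑ β, vort P α β x * u α * v β)

/-- Embedding of ℝ³ into the initial plane {x⁰ = 0} of ℝ⁴. -/
def emb (y : V3) : V4 := ![0, y 0, y 1, y 2]

/-- The relativistic helicity 𝔠(s): the integral of P ∧ dP over the co-moving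
    volume φ_s(V₀), expressed by pulling back along ψ_s(y) = φ_s(0, y). -/
def relHelicity (φ : ℝ → V4 → V4) (P : V4 → V4) (V₀ : Set V3) (s : ℝ) : ℝ :=
  ∫ y in V₀,
    Wform P (φ s (emb y))
      (fderiv ℝ (fun z => φ s (emb z)) y (Pi.single 0 1))
      (fderiv ℝ (fun z => φ s (emb z)) y (Pi.single 1 1))
      (fderiv ℝ (fun z => φ s (emb z)) y (Pi.single 2 1))

section aux
variable {E X : Type*} [NormedAddCommGroup E] [NormedSpace ℝ E]
  [NormedAddCommGroup X] [NormedSpace ℝ X]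

theorem aux_symm {ψ : E → X} (hψ : ContDiff ℝ 2 ψ) (y u v : E) :
    fderiv ℝ (fderiv ℝ ψ) y u v = fderiv ℝ (fderiv ℝ ψ) y v u :=
  (hψ.contDiffAt.isSymmSndFDerivAt (by simp)) u v

theorem aux_dfd {ψ : E → X} (hψ : ContDiff ℝ 2 ψ) : ContDiff ℝ 1 (fderiv ℝ ψ) :=
  hψ.fderiv_right (by norm_num)

/-- pullback of a one-form -/
def pullb (p : X → X →L[ℝ] ℝ) (ψ : E → X) (y : E) : E →L[ℝ] ℝ :=
  (p (ψ y)).comp (fderiv ℝ ψ y)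

/-- curl of a one-form -/
def curl1 (q : E → E →L[ℝ] ℝ) (y u v : E) : ℝ := fderiv ℝ q y u v - fderiv ℝ q y v u

theorem pullb_contDiff {p : X → X →L[ℝ] ℝ} (hp : ContDiff ℝ 1 p) {ψ : E → X}
    (hψ : ContDiff ℝ 2 ψ) : ContDiff ℝ 1 (pullb p ψ) :=
  (hp.comp (hψ.of_le (by norm_num))).clm_comp (aux_dfd hψ)

theorem curl1_pullb {p : X → X →L[ℝ] ℝ} (hp : ContDiff ℝ 1 p) {ψ : E → X}
    (hψ : ContDiff ℝ 2 ψ) (y u v : E) :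
    curl1 (pullb p ψ) y u v = curl1 p (ψ y) (fderiv ℝ ψ y u) (fderiv ℝ ψ y v) := by
  have h1 : HasFDerivAt (fun y => p (ψ y)) ((fderiv ℝ p (ψ y)).comp (fderiv ℝ ψ y)) y :=
    ((hp.differentiable (by norm_num)) (ψ y)).hasFDerivAt.comp y
      ((hψ.differentiable (by norm_num)) y).hasFDerivAt
  have h2 := (((aux_dfd hψ).differentiable (by norm_num)) y).hasFDerivAt
  have h3 : fderiv ℝ (pullb p ψ) y = _ := (h1.clm_comp h2).fderiv
  unfold curl1
  rw [h3]
  simp [aux_symm hψ y u v]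

theorem aux_time {φ : ℝ × E → X} (hφ : ContDiff ℝ 2 φ) {U : X → X} (hU : ContDiff ℝ 1 U)
    (hflow : ∀ s x, HasDerivAt (fun s => φ (s, x)) (U (φ (s, x))) s) (s : ℝ) (y : E) :
    HasDerivAt (fun s => fderiv ℝ (fun z => φ (s, z)) y)
      ((fderiv ℝ U (φ (s, y))).comp (fderiv ℝ (fun z => φ (s, z)) y)) s := by
  have hd : ∀ q, HasFDerivAt φ (fderiv ℝ φ q) q := fun q =>
    ((hφ.differentiable (by norm_num)) q).hasFDerivAt
  have hsp : ∀ s y, fderiv ℝ (fun z => φ (s, z)) y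
      = (fderiv ℝ φ (s, y)).comp (ContinuousLinearMap.inr ℝ ℝ E) := fun s y =>
    ((hd (s, y)).comp y (hasFDerivAt_prodMk_right s y)).fderiv
  have htm : ∀ q : ℝ × E, fderiv ℝ φ q (1, 0) = U (φ q) := by
    rintro ⟨s, y⟩
    have := ((hd (s, y)).comp s (hasFDerivAt_prodMk_left s y)).hasDerivAt
    simpa using this.unique (hflow s y)
  have h2 := (((aux_dfd hφ).differentiable (by norm_num)) (s, y)).hasFDerivAt
  have h3 : HasDerivAt (fun s => fderiv ℝ φ (s, y)) (fderiv ℝ (fderiv ℝ φ) (s, y) (1, 0)) s := by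
    have h := (h2.comp s (hasFDerivAt_prodMk_left s y)).hasDerivAt
    have e : ((fderiv ℝ (fderiv ℝ φ) (s, y)).comp (ContinuousLinearMap.inl ℝ ℝ E)) 1
        = fderiv ℝ (fderiv ℝ φ) (s, y) (1, 0) := by simp
    rw [e] at h
    exact h
  have h4 : ∀ w, fderiv ℝ (fderiv ℝ φ) (s, y) w (1, 0)
      = fderiv ℝ U (φ (s, y)) (fderiv ℝ φ (s, y) w) := by
    intro w
    have ha : HasFDerivAt (fun q => fderiv ℝ φ q (1, 0)) _ (s, y) :=
      h2.clm_apply (hasFDerivAt_const ((1 : ℝ), (0 : E)) (s, y))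
    have hb : HasFDerivAt (fun q => U (φ q)) _ (s, y) :=
      ((hU.differentiable (by norm_num)) (φ (s, y))).hasFDerivAt.comp (s, y) (hd (s, y))
    have hc : (fun q => fderiv ℝ φ q (1, 0)) = fun q => U (φ q) := funext htm
    rw [hc] at ha
    have := congrArg (fun L => L w) (ha.unique hb)
    simpa using this
  simp only [hsp]
  have h5 := h3.clm_comp (hasDerivAt_const s (ContinuousLinearMap.inr ℝ ℝ E))
  convert h5 using 1
  ext w
  simp [← h4, aux_symm hφ (s, y) (1, 0)]

theorem aux_pull_time {φ : ℝ × E → X} (hφ : ContDiff ℝ 2 φ) {U : X → X} (hU : ContDiff ℝ 1 U)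
    (hflow : ∀ s x, HasDerivAt (fun s => φ (s, x)) (U (φ (s, x))) s)
    {p : X → X →L[ℝ] ℝ} (hp : ContDiff ℝ 1 p) {F : X → ℝ}
    (heq : ∀ x v, fderiv ℝ p x (U x) v + p x (fderiv ℝ U x v) = fderiv ℝ F x v)
    (s : ℝ) (y : E) :
    HasDerivAt (fun s => pullb p (fun z => φ (s, z)) y)
      ((fderiv ℝ F (φ (s, y))).comp (fderiv ℝ (fun z => φ (s, z)) y)) s := by
  have h1 := aux_time hφ hU hflow s y
  have h2 : HasDerivAt (fun s => p (φ (s, y))) (fderiv ℝ p (φ (s, y)) (U (φ (s, y)))) s :=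
    ((hp.differentiable (by norm_num)) (φ (s, y))).hasFDerivAt.comp_hasDerivAt s (hflow s y)
  have h3 := h2.clm_comp h1
  unfold pullb
  convert h3 using 1
  ext v
  simp [← heq]

theorem aux_grad [FiniteDimensional ℝ E] {φ : ℝ × E → X} (hφ : ContDiff ℝ 2 φ) {U : X → X}
    (hU : ContDiff ℝ 1 U)
    (hflow : ∀ s x, HasDerivAt (fun s => φ (s, x)) (U (φ (s, x))) s)
    {p : X → X →L[ℝ] ℝ} (hp : ContDiff ℝ 1 p) {F : X → ℝ} (hF : ContDiff ℝ 1 F)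
    (heq : ∀ x v, fderiv ℝ p x (U x) v + p x (fderiv ℝ U x v) = fderiv ℝ F x v) (s : ℝ) :
    ∃ g : E → ℝ, ∀ y, HasFDerivAt g
      (pullb p (fun z => φ (s, z)) y - pullb p (fun z => φ (0, z)) y) y := by
  have hd : ∀ q, HasFDerivAt φ (fderiv ℝ φ q) q := fun q =>
    ((hφ.differentiable (by norm_num)) q).hasFDerivAt
  have hsp : ∀ s y, HasFDerivAt (fun z => φ (s, z))
      ((fderiv ℝ φ (s, y)).comp (ContinuousLinearMap.inr ℝ ℝ E)) y := fun s y =>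
    ((hd (s, y)).comp y (hasFDerivAt_prodMk_right s y))
  have hφc : Continuous φ := hφ.continuous
  have hφd : Continuous (fderiv ℝ φ) := (aux_dfd hφ).continuous
  have hFc : Continuous F := hF.continuous
  have hFd : Continuous (fderiv ℝ F) := hF.continuous_fderiv (by norm_num)
  let G : ℝ × E → E →L[ℝ] ℝ := fun q => (fderiv ℝ F (φ q)).comp
    ((fderiv ℝ φ q).comp (ContinuousLinearMap.inr ℝ ℝ E))
  have hG : Continuous G :=
    (hFd.comp hφc).clm_comp (hφd.clm_comp continuous_const)
  refine ⟨fun y => ∫ t in (0:ℝ)..s, F (φ (t, y)), fun y => ?_⟩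
  have hftc : ∫ t in (0:ℝ)..s, G (t, y)
      = pullb p (fun z => φ (s, z)) y - pullb p (fun z => φ (0, z)) y := by
    apply intervalIntegral.integral_eq_sub_of_hasDerivAt
      (f := fun s => pullb p (fun z => φ (s, z)) y)
    · intro t _
      have := aux_pull_time hφ hU hflow hp heq t y
      rw [(hsp t y).fderiv] at this
      exact this
    · exact (hG.comp (by fun_prop : Continuous fun t : ℝ => (t, y))).intervalIntegrable _ _
  rw [← hftc]
  obtain ⟨C, hC⟩ := ((isCompact_uIcc (a := (0:ℝ)) (b := s)).prod
    (isCompact_closedBall y 1)).exists_bound_of_continuousOn hG.continuousOn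
  refine intervalIntegral.hasFDerivAt_integral_of_dominated_of_fderiv_le
    (F := fun y t => F (φ (t, y))) (F' := fun y t => G (t, y)) (bound := fun _ => C)
    (Metric.closedBall_mem_nhds y one_pos) ?_ ?_ ?_ ?_ ?_ ?_
  · exact Filter.Eventually.of_forall fun x =>
      (by fun_prop : Continuous fun t : ℝ => F (φ (t, x))).aestronglyMeasurable
  · exact (by fun_prop : Continuous fun t : ℝ => F (φ (t, y))).intervalIntegrable _ _
  · exact (by fun_prop : Continuous fun t : ℝ => G (t, y)).aestronglyMeasurable
  · exact Filter.Eventually.of_forall fun t ht x hx =>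
      hC (t, x) ⟨Set.uIoc_subset_uIcc ht, hx⟩
  · exact intervalIntegrable_const
  · exact Filter.Eventually.of_forall fun t ht x hx =>
      (((hF.differentiable (by norm_num)) (φ (t, x))).hasFDerivAt.comp x (hsp t x))

theorem aux_ibp {g : V3 → ℝ} (hg : ContDiff ℝ 1 g) {B : V3 → ℝ} (hB : ContDiff ℝ 1 B)
    (hc : HasCompactSupport B) (v : V3) :
    Integrable (fun y => fderiv ℝ g y v * B y) ∧ Integrable (fun y => g y * fderiv ℝ B y v) ∧
    ∫ y, fderiv ℝ g y v * B y = - ∫ y, g y * fderiv ℝ B y v := by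
  have hgd : Continuous (fderiv ℝ g) := hg.continuous_fderiv (by norm_num)
  have hBd : Continuous (fderiv ℝ B) := hB.continuous_fderiv (by norm_num)
  have hgc := hg.continuous
  have hBc := hB.continuous
  have h1 : Integrable (fun y => fderiv ℝ g y v * B y) :=
    (by fun_prop : Continuous fun y => fderiv ℝ g y v * B y).integrable_of_hasCompactSupport
      hc.mul_left
  have h2 : Integrable (fun y => g y * fderiv ℝ B y v) :=
    (by fun_prop : Continuous fun y => g y * fderiv ℝ B y v).integrable_of_hasCompactSupport
      (hc.fderiv_apply ℝ v).mul_left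
  have h3 : Integrable (fun y => g y * B y) :=
    (by fun_prop : Continuous fun y => g y * B y).integrable_of_hasCompactSupport
      hc.mul_left
  refine ⟨h1, h2, ?_⟩
  rw [integral_mul_fderiv_eq_neg_fderiv_mul_of_integrable h1 h2 h3
    (fun x _ => hg.differentiable (by norm_num) x) (fun x _ => hB.differentiable (by norm_num) x)]
  simp

theorem curl1_contDiff {q : E → E →L[ℝ] ℝ} (hq : ContDiff ℝ 2 q) (u v : E) :
    ContDiff ℝ 1 (fun y => curl1 q y u v) := by
  have := aux_dfd hq
  unfold curl1
  fun_prop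

theorem curl1_fderiv {q : E → E →L[ℝ] ℝ} (hq : ContDiff ℝ 2 q) (y u v w : E) :
    fderiv ℝ (fun y => curl1 q y u v) y w
      = fderiv ℝ (fderiv ℝ q) y w u v - fderiv ℝ (fderiv ℝ q) y w v u := by
  have h := (((aux_dfd hq).differentiable (by norm_num)) y).hasFDerivAt
  have key : ∀ a b : E, HasFDerivAt (fun y => fderiv ℝ q y a b) _ y := fun a b =>
    (h.clm_apply (hasFDerivAt_const a y)).clm_apply (hasFDerivAt_const b y)
  have h2 : fderiv ℝ (fun y => curl1 q y u v) y = _ := ((key u v).sub (key v u)).fderiv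
  rw [h2]
  simp

theorem aux_div {q : V3 → V3 →L[ℝ] ℝ} (hq : ContDiff ℝ 2 q)
    (hc : ∀ u v, HasCompactSupport (fun y => curl1 q y u v))
    {g : V3 → ℝ} (hg : ContDiff ℝ 1 g) (a b c : V3) :
    ∫ y, (fderiv ℝ g y a * curl1 q y b c + fderiv ℝ g y b * curl1 q y c a
      + fderiv ℝ g y c * curl1 q y a b) = 0 := by
  obtain ⟨i1, j1, k1⟩ := aux_ibp hg (curl1_contDiff hq b c) (hc b c) a
  obtain ⟨i2, j2, k2⟩ := aux_ibp hg (curl1_contDiff hq c a) (hc c a) b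
  obtain ⟨i3, j3, k3⟩ := aux_ibp hg (curl1_contDiff hq a b) (hc a b) c
  have i12 := integral_add i1 i2
  have i123 := integral_add (i1.add i2) i3
  have j12 := integral_add j1 j2
  have j123 := integral_add (j1.add j2) j3
  simp only [Pi.add_apply] at i12 i123 j12 j123
  rw [i123, i12, k1, k2, k3, ← neg_add, ← neg_add, ← j12, ← j123, neg_eq_zero]
  rw [← integral_zero V3 ℝ]
  congr 1
  ext y
  rw [curl1_fderiv hq, curl1_fderiv hq, curl1_fderiv hq, aux_symm hq y b a, aux_symm hq y c a,
    aux_symm hq y c b]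
  ring

end aux

/-- the covector field as a continuous linear functional -/
def pC (P : V4 → V4) (x : V4) : V4 →L[ℝ] ℝ :=
  ∑ μ, P x μ • (ContinuousLinearMap.proj μ : V4 →L[ℝ] ℝ)

theorem pC_apply (P : V4 → V4) (x v : V4) : pC P x v = ∑ μ, P x μ * v μ := by
  simp [pC]

theorem pC_contDiff {P : V4 → V4} (hP : ContDiff ℝ 2 P) : ContDiff ℝ 2 (pC P) := by
  unfold pC
  fun_prop

theorem aux_pd {h : V4 → ℝ} (x v : V4) : fderiv ℝ h x v = ∑ μ, v μ * pd4 μ h x := by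
  conv_lhs => rw [← Finset.univ_sum_single v]
  rw [map_sum]
  refine Finset.sum_congr rfl fun μ _ => ?_
  have : (Pi.single μ (v μ) : V4) = v μ • Pi.single μ 1 := by
    rw [← Pi.single_smul]; simp
  rw [this, map_smul, smul_eq_mul, pd4]

theorem pC_fderiv {P : V4 → V4} (hP : ContDiff ℝ 2 P) (x u v : V4) :
    fderiv ℝ (pC P) x u v = ∑ ν, (∑ μ, u μ * pd4 μ (fun y => P y ν) x) * v ν := by
  have hd : ∀ ν, HasFDerivAt (fun y => P y ν) (fderiv ℝ (fun y => P y ν) x) x := fun ν =>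
    DifferentiableAt.hasFDerivAt (by
      have := hP.differentiable (by norm_num)
      fun_prop)
  have h : HasFDerivAt (pC P) _ x :=
    HasFDerivAt.fun_sum (u := Finset.univ) fun ν _ =>
      (hd ν).smul_const (ContinuousLinearMap.proj ν : V4 →L[ℝ] ℝ)
  rw [h.fderiv]
  simp [aux_pd]

theorem pC_curl {P : V4 → V4} (hP : ContDiff ℝ 2 P) (x u v : V4) :
    curl1 (pC P) x u v = ∑ α, ∑ β, vort P α β x * u α * v β := by
  unfold curl1 vort
  rw [pC_fderiv hP, pC_fderiv hP]
  simp only [Fin.sum_univ_four]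
  ring

theorem emb_contDiff : ContDiff ℝ 2 emb := by
  rw [contDiff_pi]
  intro i
  fin_cases i <;> simp [emb] <;> fun_prop

theorem Wform_eq {P : V4 → V4} (hP : ContDiff ℝ 2 P) {ψ : V3 → V4} (hψ : ContDiff ℝ 2 ψ)
    (y a b c : V3) :
    Wform P (ψ y) (fderiv ℝ ψ y a) (fderiv ℝ ψ y b) (fderiv ℝ ψ y c)
      = pullb (pC P) ψ y a * curl1 (pullb (pC P) ψ) y b c
        + pullb (pC P) ψ y b * curl1 (pullb (pC P) ψ) y c a
        + pullb (pC P) ψ y c * curl1 (pullb (pC P) ψ) y a b := by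
  have hp : ContDiff ℝ 1 (pC P) := (pC_contDiff hP).of_le (by norm_num)
  simp only [curl1_pullb hp hψ, pC_curl hP]
  simp only [pullb, ContinuousLinearMap.comp_apply, pC_apply]
  rfl

/-- Relativistic helicity conservation: under the barotropic equation of motion
    L_U P = c⁻¹ df, the relativistic helicity 𝔠(s) on a co-moving volume containing
    the support of the vorticity is independent of the proper-time parameter s. -/
theorem relativistic_helicity_conservation (c : ℝ) (hc : 0 < c)
    (U : V4 → V4) (hU : ContDiff ℝ 2 U)
    (φ : ℝ → V4 → V4) (hφ : ContDiff ℝ 2 (fun q : ℝ × V4 => φ q.1 q.2))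
    (hφ0 : φ 0 = id)
    (hflow : ∀ s x, HasDerivAt (fun s => φ s x) (U (φ s x)) s)
    (hdiffeo : ∀ s, Function.Bijective (φ s))
    (P : V4 → V4) (hP : ContDiff ℝ 2 P)
    (f : V4 → ℝ) (hf : ContDiff ℝ 1 f)
    (heqm : ∀ x ν, lieDeriv1 U P x ν = c⁻¹ * pd4 ν f x)
    (V₀ : Set V3) (hV₀c : IsCompact V₀) (hV₀m : MeasurableSet V₀)
    (hsupp : closure {y : V3 | ∃ μ ν, vort P μ ν (emb y) ≠ 0} ⊆ interior V₀) :
    ∀ s₁ s₂ : ℝ, relHelicity φ P V₀ s₁ = relHelicity φ P V₀ s₂ := by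
  have hp2 := pC_contDiff hP
  have hp : ContDiff ℝ 1 (pC P) := hp2.of_le (by norm_num)
  have hembc := emb_contDiff
  let Φ : ℝ × V3 → V4 := fun q => φ q.1 (emb q.2)
  have hΦ : ContDiff ℝ 2 Φ :=
    hφ.comp (contDiff_fst.prodMk (hembc.comp contDiff_snd))
  have hψ : ∀ s, ContDiff ℝ 2 (fun z => φ s (emb z)) := fun s =>
    hΦ.comp (contDiff_const.prodMk contDiff_id)
  have hUd : ∀ μ, Differentiable ℝ (fun y => U y μ) := fun μ => by
    have := hU.differentiable (by norm_num)
    fun_prop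
  have hfd : Differentiable ℝ f := hf.differentiable (by norm_num)
  have heq : ∀ x v, fderiv ℝ (pC P) x (U x) v + pC P x (fderiv ℝ U x v)
      = fderiv ℝ (fun x => c⁻¹ * f x) x v := by
    intro x v
    have h1 : ∀ μ, fderiv ℝ U x v μ = ∑ ν, v ν * pd4 ν (fun y => U y μ) x := by
      intro μ
      rw [← aux_pd, fderiv_apply (hU.differentiable (by norm_num) x)]
      rfl
    rw [pC_fderiv hP, pC_apply, fderiv_const_mul (hfd x)]
    simp only [h1, _root_.smul_apply, aux_pd (h := f), smul_eq_mul]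
    have h2 := heqm x
    simp only [lieDeriv1, Fin.sum_univ_four] at h2
    simp only [Fin.sum_univ_four]
    linear_combination v 0 * h2 0 + v 1 * h2 1 + v 2 * h2 2 + v 3 * h2 3
  set q : V3 → V3 →L[ℝ] ℝ := pullb (pC P) (fun z => φ 0 (emb z)) with hq
  have hq0 : q = pullb (pC P) emb := by simp [hq, hφ0]
  let L : V3 →L[ℝ] V4 := fderiv ℝ emb 0
  have hL : ∀ y, fderiv ℝ emb y = L := by
    let l : V3 →ₗ[ℝ] V4 :=
      { toFun := emb
        map_add' := fun x y => by ext i; fin_cases i <;> simp [emb]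
        map_smul' := fun r x => by ext i; fin_cases i <;> simp [emb] }
    have : ∀ y, HasFDerivAt emb (LinearMap.toContinuousLinearMap l) y := fun y =>
      (LinearMap.toContinuousLinearMap l).hasFDerivAt
    intro y
    rw [(this y).fderiv, ← (this 0).fderiv]
  have hqc : ContDiff ℝ 2 q := by
    have : q = fun y => (pC P (emb y)).comp L := by
      rw [hq0]; funext y; rw [pullb, hL]
    rw [this]
    exact (hp2.comp hembc).clm_comp contDiff_const
  have hcurl0 : ∀ y u v, curl1 q y u v ≠ 0 → y ∈ V₀ := by
    intro y u v h
    apply interior_subset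
    apply hsupp
    apply subset_closure
    by_contra hcon
    simp only [Set.mem_ofPred_eq, not_exists, not_not] at hcon
    apply h
    rw [hq0, curl1_pullb hp hembc, pC_curl hP]
    simp [hcon]
  have hcs : ∀ u v, HasCompactSupport (fun y => curl1 q y u v) := fun u v =>
    HasCompactSupport.of_support_subset_isCompact hV₀c fun y hy => hcurl0 y u v hy
  have main : ∀ s, relHelicity φ P V₀ s = relHelicity φ P V₀ 0 := by
    intro s
    obtain ⟨g, hg⟩ := aux_grad hΦ (hU.of_le (by norm_num)) (fun s x => hflow s (emb x)) hp
      (contDiff_const.mul hf) heq s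
    change ∀ y, HasFDerivAt g (pullb (pC P) (fun z => φ s (emb z)) y - q y) y at hg
    set a : V3 → V3 →L[ℝ] ℝ := pullb (pC P) (fun z => φ s (emb z)) with ha
    have hac : ContDiff ℝ 1 a := pullb_contDiff hp (hψ s)
    have hq1 : ContDiff ℝ 1 q := hqc.of_le (by norm_num)
    have hgf : fderiv ℝ g = fun y => a y - q y := funext fun y => (hg y).fderiv
    have hg1 : ContDiff ℝ 1 g := by
      rw [contDiff_one_iff_fderiv]
      refine ⟨fun y => (hg y).differentiableAt, ?_⟩
      rw [hgf]
      exact (hac.sub hq1).continuous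
    have hcurl : ∀ y u v, curl1 a y u v = curl1 q y u v := by
      intro y u v
      have h1 := ((hac.differentiable (by norm_num)) y).hasFDerivAt.sub
        ((hq1.differentiable (by norm_num)) y).hasFDerivAt
      have h2 := second_derivative_symmetric hg h1 u v
      simp only [_root_.sub_apply] at h2
      unfold curl1
      linear_combination h2
    have hdiv := aux_div hqc hcs hg1 (Pi.single 0 1) (Pi.single 1 1) (Pi.single 2 1)
    rw [← setIntegral_eq_integral_of_forall_compl_eq_zero (s := V₀)] at hdiv
    swap
    · intro y hy
      have : ∀ u v, curl1 q y u v = 0 := fun u v => by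
        by_contra h
        exact hy (hcurl0 y u v h)
      simp [this]
    have hcc : ∀ u v, Continuous fun y => curl1 q y u v := fun u v =>
      (curl1_contDiff hqc u v).continuous
    have hqcont := hq1.continuous
    have hacont := hac.continuous
    unfold relHelicity
    simp only [Wform_eq hP (hψ _), ← ha, ← hq, hcurl]
    rw [← sub_eq_zero, ← integral_sub, ← hdiv]
    · congr 1
      ext y
      simp only [hgf, _root_.sub_apply]
      ring
    · exact ContinuousOn.integrableOn_compact hV₀c (Continuous.continuousOn (by fun_prop))
    · exact ContinuousOn.integrableOn_compact hV₀c (Continuous.continuousOn (by fun_prop))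
  intro s₁ s₂
  rw [main s₁, main s₂]
end
end
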